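/- arXiv:1912.12556 — 3 statements merged into one kernel-verified Lean document; each statement's English description precedes it below -/
import Mathlib

section
/- Let K be an algebraically closed field of characteristic 0, let w be a nontrivial word in the free group F_s on s generators with reduced word length ℓ(w), and let n ≥ 2. Then for every g ∈ SL_n(K), the set {(g_1,…,g_s) ∈ SL_n(K)^s : w(g_1,…,g_s) = g}, which is a Zariski-closed subset of the affine space of s-tuples of n×n matrices, has dimension at most (s − 1/(10^{17}·ℓ(w)^9))·(n² − 1). (This is the jet-level-zero content of the paper's statement that φ_w : SL_n^s → SL_n is 1/(10^{17}ℓ(w)^9)-jet flat.) -/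
/-!
Write `ℓ` for the length of `w`. Passing to the fraction field `L` of a top-dimensional component
of the fibre over `g₀` turns the dimension `D` into a transcendence degree: there is a *generic
point*, a tuple `g` in `SL_n(L)^s` whose entries generate `L` over `K`, with `w(g) = g₀`, and `L`
contains `D` algebraically independent elements (`exists_generic_point`). It remains to generate `L`
by few elements.

*Long matrices, `n ≥ 8ℓ`.* Reveal the matrices `g x` gradually. Start a row vector at a standard
basis vector and multiply it by the successive letters of `w`; because `w(g) = g₀` has entries in
`K`, the trajectory ends at a vector over `K`. A step whose result is a fresh vector costs at
most `n` new elements of `L`, as many as the number of scalars which the matrix of that letter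
loses by having its value on one more vector prescribed. The last vector is over `K`, so in each
trajectory some step lands in the span of the vectors met before; the first such step costs only the
coefficients of a linear combination of at most about `2kℓ` vectors, and saves almost `n`
parameters (`exists_revealed_trajectory`). Reducedness of `w` is what makes each step apply a matrix
to a vector outside the span of those on which its value is already known. Repeating this from
`k = ⌊n / 8ℓ⌋` starting vectors (`exists_revealed`), and completing each `g x` with its remaining
entries, one of which is determined by `det (g x) = 1` (`exists_completion`), gives
`D + s + k n ≤ s n² + 2 k² ℓ` (`dim_add_le_of_length_lt`), which suffices.

*Short matrices, `n < 8ℓ`.* Here the required codimension is less than `1`, so it is enough that the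
fibre is not all of `SL_n^s`. If `D = s (n² - 1)`, the generic point, rescaled by independent
determinants, has algebraically independent entries, so `w = g₀` holds identically on `SL_n(K)^s`;
then `g₀ = 1` and `w` is a law of `SL_n(K)` (`lt_of_generic_point`). There is no such law already
for `SL_2`: matrices with eigenvalues `t, t⁻¹` and distinct prescribed eigenvectors satisfy no
relation, as one sees from the leading power of `t` (`exists_SL_lift_ne_one`).
-/

/-!
Statement 4: (jet-level-zero content of `1/(10¹⁷ℓ(w)⁹)`-jet flatness of word maps on `SL_n`).
For an algebraically closed field `K` of characteristic zero, a nontrivial word `w` in the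
free group `F_s` of reduced length `ℓ(w)`, and `n ≥ 2`, every fiber of the word map
`φ_w : SL_n(K)^s → SL_n(K)` — viewed as a Zariski-closed subset of the affine space of
`s`-tuples of `n×n` matrices — has (Krull) dimension at most
`(s − 1/(10¹⁷·ℓ(w)⁹))·(n² − 1)`.

The dimension is encoded as the Krull dimension of the quotient of the polynomial ring on the
matrix-entry variables by the vanishing ideal of the fiber.
-/

/-- The vanishing ideal of a subset `S` of the affine space `σ → K`. -/
def vanishingIdeal (K : Type) [CommRing K] {σ : Type} (S : Set (σ → K)) :
    Ideal (MvPolynomial σ K) where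
  carrier := {p | ∀ x ∈ S, MvPolynomial.aeval x p = 0}
  add_mem' := by
    intro a b ha hb x hx
    simp [map_add, ha x hx, hb x hx]
  zero_mem' := by
    intro x _
    simp
  smul_mem' := by
    intro c p hp x hx
    simp [smul_eq_mul, map_mul, hp x hx]

/-! ### Generic points of fibres -/

lemma ringKrullDim_le_of_isIntegral {A B : Type*} [CommRing A] [CommRing B] [Algebra A B]
    [Algebra.IsIntegral A B] : ringKrullDim B ≤ ringKrullDim A := by
  refine Order.krullDim_le_of_strictMono (PrimeSpectrum.comap (algebraMap A B)) ?_
  intro p q hpq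
  exact Ideal.IsIntegral.comap_lt_comap (show p.asIdeal < q.asIdeal from hpq)

/-- Elements of the coordinate ring of `S` are determined by their values at the points of `S`. -/
lemma eval_injective {K σ : Type} [Field K] (S : Set (σ → K))
    (a : MvPolynomial σ K ⧸ vanishingIdeal K S)
    (h : ∀ v (hv : v ∈ S), Ideal.Quotient.lift (vanishingIdeal K S)
      (MvPolynomial.aeval v : MvPolynomial σ K →ₐ[K] K).toRingHom (fun _ hp => hp v hv) a = 0) :
    a = 0 := by
  obtain ⟨p, rfl⟩ := Ideal.Quotient.mk_surjective a
  rw [Ideal.Quotient.eq_zero_iff_mem]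
  intro v hv
  simpa using h v hv

lemma lift_map {G H α : Type*} [Group G] [Group H] (f : G →* H) (g : α → G) (w : FreeGroup α) :
    FreeGroup.lift (fun i => f (g i)) w = f (FreeGroup.lift g w) := by
  have : FreeGroup.lift (fun i => f (g i)) = f.comp (FreeGroup.lift g) := by
    ext; simp
  rw [this]; rfl

/-- A finitely generated algebra of Krull dimension `D` maps to a field `L`, generated by the image,
with `D` algebraically independent elements: by Noether normalization the algebra is integral over a
polynomial ring, and `L` is the fraction field of the quotient by a prime lying over `0`. -/
lemma exists_prime_domain (K A : Type) [Field K] [CommRing A] [Algebra K A] [Algebra.FiniteType K A]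
    (D : ℕ) (h : ringKrullDim A = D) :
    ∃ (L : Type) (_ : Field L) (_ : Algebra K L) (f : A →ₐ[K] L) (y : Fin D → L),
      AlgebraicIndependent K y ∧ ∀ E : IntermediateField K L, (∀ a, f a ∈ E) → E = ⊤ := by
  have : Nontrivial A := by
    rw [← not_subsingleton_iff_nontrivial]
    intro hs
    rw [ringKrullDim_eq_bot_of_subsingleton] at h
    exact absurd h (by simp)
  obtain ⟨d, g, hg, hint⟩ := exists_integral_inj_algHom_of_fg K A
  algebraize [g.toRingHom]
  have hd : D ≤ d := by
    have h1 := ringKrullDim_le_of_isIntegral (A := MvPolynomial (Fin d) K) (B := A)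
    rw [h, MvPolynomial.ringKrullDim_of_isNoetherianRing, ringKrullDim_eq_zero_of_field] at h1
    simp at h1
    exact_mod_cast h1
  have hinj : (⊥ : Ideal A).comap (algebraMap (MvPolynomial (Fin d) K) A) ≤ ⊥ := by
    intro x hx
    have : g x = 0 := hx
    rw [Ideal.mem_bot]
    exact hg (by simpa using this)
  obtain ⟨P, -, hP1, hP2⟩ := Ideal.exists_ideal_over_prime_of_isIntegral
    (⊥ : Ideal (MvPolynomial (Fin d) K)) (⊥ : Ideal A) hinj
  let L := FractionRing (A ⧸ P)
  let f : A →ₐ[K] L := (IsScalarTower.toAlgHom K (A ⧸ P) L).comp (Ideal.Quotient.mkₐ K P)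
  have hker : ∀ a, f a = 0 → a ∈ P := by
    intro a ha
    have : algebraMap (A ⧸ P) L (Ideal.Quotient.mk P a) = 0 := ha
    rw [FaithfulSMul.algebraMap_eq_zero_iff] at this
    exact Ideal.Quotient.eq_zero_iff_mem.1 this
  refine ⟨L, inferInstance, inferInstance, f, fun i => f (g (MvPolynomial.X (Fin.castLE hd i))), ?_, ?_⟩
  · have key : AlgebraicIndependent K (fun i : Fin d => f (g (MvPolynomial.X i))) := by
      have := (MvPolynomial.algebraicIndependent_X (Fin d) K).map' (f := f.comp g) (by
        rw [injective_iff_map_eq_zero]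
        intro a ha
        have : a ∈ P.comap (algebraMap (MvPolynomial (Fin d) K) A) := hker _ ha
        rw [hP2] at this
        simpa using this)
      exact this
    exact key.comp _ (Fin.castLE_injective hd)
  · intro E hE
    rw [eq_top_iff]
    intro x _
    obtain ⟨a, b, hb, rfl⟩ := IsFractionRing.div_surjective (A := A ⧸ P) x
    obtain ⟨a, rfl⟩ := Ideal.Quotient.mk_surjective a
    obtain ⟨b, rfl⟩ := Ideal.Quotient.mk_surjective b
    exact E.div_mem (hE a) (hE b)

/-- A fibre of the word map of dimension `D` has a generic point `g` over a field `L` generated by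
the entries of `g` and containing `D` algebraically independent elements. -/
theorem exists_generic_point (K : Type) [Field K] (s n : ℕ) (w : FreeGroup (Fin s))
    (g₀ : Matrix.SpecialLinearGroup (Fin n) K) (D : ℕ)
    (h : ringKrullDim (MvPolynomial (Fin s × Fin n × Fin n) K ⧸
          vanishingIdeal K {v : Fin s × Fin n × Fin n → K |
            ∃ g : Fin s → Matrix.SpecialLinearGroup (Fin n) K,
              (∀ (i : Fin s) (a b : Fin n),
                (g i : Matrix (Fin n) (Fin n) K) a b = v (i, a, b)) ∧
              FreeGroup.lift g w = g₀}) = D) :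
    ∃ (L : Type) (_ : Field L) (_ : Algebra K L) (g : Fin s → Matrix.SpecialLinearGroup (Fin n) L)
      (y : Fin D → L), AlgebraicIndependent K y ∧
      (∀ E : IntermediateField K L, (∀ i a b, (g i).1 a b ∈ E) → E = ⊤) ∧
      FreeGroup.lift g w = g₀.map (algebraMap K L) := by
  set S := {v : Fin s × Fin n × Fin n → K |
            ∃ g : Fin s → Matrix.SpecialLinearGroup (Fin n) K,
              (∀ (i : Fin s) (a b : Fin n),
                (g i : Matrix (Fin n) (Fin n) K) a b = v (i, a, b)) ∧
              FreeGroup.lift g w = g₀} with hS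
  set I := vanishingIdeal K S
  obtain ⟨L, _, _, f, y, hy, hE⟩ := exists_prime_domain K _ D h
  let ev : ∀ v ∈ S, (MvPolynomial (Fin s × Fin n × Fin n) K ⧸ I) →+* K := fun v hv =>
    Ideal.Quotient.lift I
      (MvPolynomial.aeval v : MvPolynomial _ K →ₐ[K] K).toRingHom (fun p hp => hp v hv)
  have hev : ∀ a, (∀ v hv, ev v hv a = 0) → a = 0 := fun a ha => eval_injective S a ha
  -- the tuple of coordinate matrices; its relations can be tested at the points of the fibre
  let X : Fin s → Matrix (Fin n) (Fin n) (MvPolynomial (Fin s × Fin n × Fin n) K ⧸ I) :=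
    fun i => Matrix.of fun a b => Ideal.Quotient.mk I (MvPolynomial.X (i, a, b))
  have hX : ∀ v hv (g : Fin s → Matrix.SpecialLinearGroup (Fin n) K), (∀ (i : Fin s) (a b : Fin n),
      (g i : Matrix (Fin n) (Fin n) K) a b = v (i, a, b)) → ∀ i,
      (X i).map (ev v hv) = (g i).1 := by
    intro v hv g hg i
    ext a b
    simp [X, ev, hg]
  have hdet : ∀ i, (X i).det = 1 := by
    intro i
    rw [← sub_eq_zero]
    refine hev _ fun v hv => ?_
    obtain ⟨g, hg, -⟩ := id hv
    have := hX v hv g hg i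
    rw [map_sub, RingHom.map_det, map_one, RingHom.mapMatrix_apply, this, (g i).2, sub_self]
  let G : Fin s → Matrix.SpecialLinearGroup (Fin n) (MvPolynomial (Fin s × Fin n × Fin n) K ⧸ I) :=
    fun i => ⟨X i, hdet i⟩
  have hG : FreeGroup.lift G w = g₀.map (algebraMap K _) := by
    ext a b
    rw [← sub_eq_zero]
    refine hev _ fun v hv => ?_
    obtain ⟨g, hg, hw⟩ := id hv
    have h1 : (fun i => Matrix.SpecialLinearGroup.map (ev v hv) (G i)) = g := by
      funext i
      apply Subtype.ext
      exact hX v hv g hg i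
    have h2 := lift_map (Matrix.SpecialLinearGroup.map (ev v hv)) G w
    rw [h1, hw] at h2
    have h3 := congrArg (fun M : Matrix.SpecialLinearGroup (Fin n) K => M.1 a b) h2
    rw [map_sub, sub_eq_zero]
    refine Eq.trans h3.symm ?_
    change _ = (ev v hv) (Ideal.Quotient.mk I (MvPolynomial.C (g₀.1 a b)))
    simp [ev]
  refine ⟨L, _, _, fun i => Matrix.SpecialLinearGroup.map f.toRingHom (G i), y, hy, ?_, ?_⟩
  · intro E hE'
    refine hE E fun a => ?_
    obtain ⟨p, rfl⟩ := Ideal.Quotient.mk_surjective a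
    have hp : p ∈ (⊤ : Subalgebra K (MvPolynomial (Fin s × Fin n × Fin n) K)) := trivial
    rw [← MvPolynomial.adjoin_range_X] at hp
    have h4 : Algebra.adjoin K (Set.range (MvPolynomial.X (R := K) (σ := Fin s × Fin n × Fin n))) ≤
        E.toSubalgebra.comap (f.comp (Ideal.Quotient.mkₐ K I)) := by
      rw [Algebra.adjoin_le_iff]
      rintro _ ⟨⟨i, a, b⟩, rfl⟩
      exact hE' i a b
    exact h4 hp
  · rw [lift_map, hG]
    ext a b
    exact f.commutes _

/-! ### Transcendence degree and generators -/

lemma isAlgebraic_of_adjoin_eq_top {K L : Type} [Field K] [Field L] [Algebra K L] (S : Set L)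
    (hS : IntermediateField.adjoin K S = ⊤) : Algebra.IsAlgebraic (Algebra.adjoin K S) L := by
  refine ⟨fun x => ?_⟩
  have hx : x ∈ IntermediateField.adjoin K S := by rw [hS]; trivial
  obtain ⟨r, hr, t, ht, rfl⟩ := (IntermediateField.mem_adjoin_iff_div).1 hx
  rw [div_eq_mul_inv]
  exact (isAlgebraic_algebraMap (⟨r, hr⟩ : Algebra.adjoin K S)).mul
    (isAlgebraic_algebraMap (⟨t, ht⟩ : Algebra.adjoin K S)).inv

/-- A field containing `D` algebraically independent elements needs at least `D` generators. -/
lemma card_le_of_adjoin_eq_top {K L : Type} [Field K] [Field L] [Algebra K L] {D : ℕ}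
    {y : Fin D → L} (hy : AlgebraicIndependent K y) (T : Finset L)
    (hT : IntermediateField.adjoin K (T : Set L) = ⊤) : D ≤ T.card := by
  have := isAlgebraic_of_adjoin_eq_top _ hT
  have h1 := Algebra.IsAlgebraic.trdeg_le_cardinalMk K (T : Set L)
  have h2 := hy.cardinalMk_le_trdeg.trans h1
  simpa using h2

/-- A generating family no larger than some algebraically independent family is itself
algebraically independent. -/
lemma algebraicIndependent_of_adjoin_eq_top {K L ι κ : Type} [Field K] [Field L] [Algebra K L]
    [Fintype ι] [Fintype κ] {x : ι → L} {y : κ → L} (hy : AlgebraicIndependent K y)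
    (hx : IntermediateField.adjoin K (Set.range x) = ⊤) (h : Fintype.card ι ≤ Fintype.card κ) :
    AlgebraicIndependent K x := by
  have := isAlgebraic_of_adjoin_eq_top _ hx
  have h1 := hy.cardinalMk_le_trdeg
  refine (Algebra.IsAlgebraic.isTranscendenceBasis_of_le_trdeg_of_finite x (R := K) (le_trans ?_ h1)).1
  simpa using h

/-! ### Absence of word laws on the special linear group -/

lemma exists_SL_embedding (K : Type) [Field K] (n : ℕ) (hn : 2 ≤ n) :
    ∃ ψ : Matrix.SpecialLinearGroup (Fin 2) K →* Matrix.SpecialLinearGroup (Fin n) K,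
      Function.Injective ψ := by
  obtain ⟨m, rfl⟩ := Nat.exists_eq_add_of_le hn
  refine ⟨⟨⟨fun A => ⟨Matrix.reindex finSumFinEquiv finSumFinEquiv
    (Matrix.fromBlocks A.1 0 0 (1 : Matrix (Fin m) (Fin m) K)), ?_⟩, ?_⟩, ?_⟩, ?_⟩
  · rw [Matrix.det_reindex_self, Matrix.det_fromBlocks_zero₂₁, A.2, Matrix.det_one, one_mul]
  · apply Subtype.ext
    simp
  · intro A B
    apply Subtype.ext
    rw [Matrix.SpecialLinearGroup.coe_mul]
    simp [Matrix.submatrix_mul_equiv, Matrix.fromBlocks_multiply]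
  · intro A B h
    have h1 := congrArg Subtype.val h
    have h2 := (Matrix.reindex _ _).injective h1
    exact Subtype.ext (Matrix.fromBlocks_inj.1 h2).1

section
variable {K : Type} [Field K]

/-- The slope attached to a letter, so that the line through `(1, slopeOf K y)` will be an
eigenline of the matrix substituted for `y`. The slopes are distinct natural numbers, hence also
different from the slope `-1` of the vector `(1, -1)` on which words are evaluated. -/
def slopeOf {s : ℕ} (K : Type) [Field K] (y : Fin s × Bool) : K :=
  ((2 * (y.1 : ℕ) + (if y.2 then 1 else 0) : ℕ) : K)

lemma slopeOf_injective [CharZero K] {s : ℕ} {y z : Fin s × Bool}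
    (h : slopeOf K y = slopeOf K z) : y = z := by
  unfold slopeOf at h
  have h' := Nat.cast_injective h
  obtain ⟨⟨i, hi⟩, b⟩ := y
  obtain ⟨⟨j, hj⟩, c⟩ := z
  cases b <;> cases c <;> simp at h' ⊢ <;> omega

lemma slopeOf_ne_neg_one [CharZero K] {s : ℕ} {y : Fin s × Bool} : slopeOf K y ≠ -1 := by
  unfold slopeOf
  intro h
  refine Nat.cast_add_one_ne_zero (R := K) (2 * (y.1 : ℕ) + (if y.2 then 1 else 0)) ?_
  rw [h]; simp

/-- The `2 × 2` matrix with eigenvector `(1, c)` for the eigenvalue `t` and eigenvector `(1, d)` for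
the eigenvalue `t⁻¹`. -/
noncomputable def hyp (c d t : K) : Matrix (Fin 2) (Fin 2) K :=
  (c - d)⁻¹ • !![t⁻¹ * c - t * d, t - t⁻¹; c * d * (t⁻¹ - t), t * c - t⁻¹ * d]

lemma det_hyp {c d t : K} (h : c ≠ d) (ht : t ≠ 0) : (hyp c d t).det = 1 := by
  have : c - d ≠ 0 := sub_ne_zero.2 h
  simp [hyp, Matrix.det_fin_two]
  field_simp
  ring

/-- Inverting the matrix exchanges the two eigenlines. -/
lemma adjugate_hyp {c d t : K} (h : c ≠ d) (ht : t ≠ 0) :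
    (hyp c d t).adjugate = hyp d c t := by
  have h1 : c - d ≠ 0 := sub_ne_zero.2 h
  have h2 : d - c ≠ 0 := sub_ne_zero.2 h.symm
  rw [Matrix.adjugate_fin_two]
  ext i j
  fin_cases i <;> fin_cases j <;> simp [hyp] <;> rw [← neg_sub c d, inv_neg] <;> field_simp <;> ring

open Polynomial in
/-- Ping-pong at `t → ∞`. Evaluating a reduced word of length `m` on `(1, -1)` gives, up to the factor
`t ^ m`, a vector of polynomials of degree `2 m` in `t` whose leading coefficients are proportional to
`(1, c)`, where `c` is the slope of the first letter: prepending a letter multiplies by `t ^ 2` the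
component along its own eigenline, and that component does not vanish to leading order because the
word is reduced. -/
lemma exists_poly_orbit [CharZero K] {s : ℕ} (l : List (Fin s × Bool)) (hl : FreeGroup.IsReduced l) :
    ∃ (q : Fin 2 → K[X]) (κ : K), κ ≠ 0 ∧ (∀ i, (q i).natDegree ≤ 2 * l.length) ∧
      (q 0).coeff (2 * l.length) = κ ∧
      (q 1).coeff (2 * l.length) = κ * (l.head?.elim (-1) (slopeOf K)) ∧
      ∀ t : K, t ≠ 0 →
        t ^ l.length • ((l.map fun y => hyp (slopeOf K y) (slopeOf K (y.1, !y.2)) t).prod.mulVec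
          ![1, -1]) = fun i => (q i).eval t := by
  induction l with
  | nil =>
    refine ⟨![1, -1], 1, one_ne_zero, ?_, by simp, by simp, ?_⟩
    · intro i; fin_cases i <;> simp
    · intro t ht
      ext i; fin_cases i <;> simp
  | cons y l ih =>
    obtain ⟨q, κ, hκ, hdeg, h0, h1, hq⟩ := ih (List.IsChain.tail hl)
    set c := slopeOf K y with hc
    set d := slopeOf K (y.1, !y.2) with hd
    have hcd : c ≠ d := by
      intro h
      have := slopeOf_injective h
      have := congrArg Prod.snd this
      simp at this
    have hcd' : c - d ≠ 0 := sub_ne_zero.2 hcd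
    set e := l.head?.elim (-1) (slopeOf K) with he
    have hed : e ≠ d := by
      cases l with
      | nil => exact fun h => slopeOf_ne_neg_one h.symm
      | cons z l =>
        intro h
        have h := slopeOf_injective h
        have h2 := (FreeGroup.isReduced_cons_cons.1 hl).1
        subst h
        simp at h2
    -- components along the eigenvectors `(1, c)` and `(1, d)` of the new letter
    let φ : K[X] := C (c - d)⁻¹ * (q 1 - C d * q 0)
    let φ' : K[X] := C (c - d)⁻¹ * (C c * q 0 - q 1)
    have hφd : φ.natDegree ≤ 2 * l.length := by
      refine (natDegree_C_mul_le _ _).trans ((natDegree_sub_le _ _).trans (max_le (hdeg 1) ?_))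
      exact (natDegree_C_mul_le _ _).trans (hdeg 0)
    have hφd' : φ'.natDegree ≤ 2 * l.length := by
      refine (natDegree_C_mul_le _ _).trans ((natDegree_sub_le _ _).trans (max_le ?_ (hdeg 1)))
      exact (natDegree_C_mul_le _ _).trans (hdeg 0)
    have hφc : φ.coeff (2 * l.length) = (c - d)⁻¹ * (κ * e - d * κ) := by
      simp only [φ, coeff_C_mul, coeff_sub, h0, h1]
    have hφ'0 : φ'.coeff (2 * l.length + 2) = 0 :=
      coeff_eq_zero_of_natDegree_lt (by omega)
    have key : ∀ u u' : K, (C u * (X ^ 2 * φ) + C u' * φ').natDegree ≤ 2 * (l.length + 1) := by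
      intro u u'
      refine (natDegree_add_le _ _).trans (max_le ?_ ?_)
      · refine (natDegree_C_mul_le _ _).trans (natDegree_mul_le.trans ?_)
        rw [natDegree_X_pow]; omega
      · exact (natDegree_C_mul_le _ _).trans (by omega)
    have key2 : ∀ u u' : K, (C u * (X ^ 2 * φ) + C u' * φ').coeff (2 * (l.length + 1)) =
        u * ((c - d)⁻¹ * (κ * e - d * κ)) := by
      intro u u'
      rw [show 2 * (l.length + 1) = 2 * l.length + 2 by ring, coeff_add, coeff_C_mul, coeff_C_mul,
        hφ'0, coeff_X_pow_mul, hφc, mul_zero, add_zero]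
    refine ⟨![C 1 * (X ^ 2 * φ) + C 1 * φ', C c * (X ^ 2 * φ) + C d * φ'],
      (c - d)⁻¹ * (κ * e - d * κ), ?_, ?_, ?_, ?_, ?_⟩
    · refine mul_ne_zero (inv_ne_zero hcd') ?_
      rw [mul_comm d, ← mul_sub]
      exact mul_ne_zero hκ (sub_ne_zero.2 hed)
    · intro i
      fin_cases i
      · exact key 1 1
      · exact key c d
    · refine (key2 1 1).trans (one_mul _)
    · refine (key2 c d).trans (mul_comm _ _)
    · intro t ht
      have := hq t ht
      rw [List.map_cons, List.prod_cons, ← Matrix.mulVec_mulVec, List.length_cons, pow_succ,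
        mul_comm, mul_smul, ← Matrix.mulVec_smul, this]
      ext i
      fin_cases i
      · simp [hyp, dotProduct, Fin.sum_univ_two, φ, φ', ← hc, ← hd]
        field_simp
        ring
      · simp [hyp, dotProduct, Fin.sum_univ_two, φ, φ', ← hc, ← hd]
        field_simp
        ring

open Polynomial in
/-- No nontrivial word is a law of `SL_n` in characteristic zero. -/
theorem exists_SL_lift_ne_one (K : Type) [Field K] [CharZero K] (s n : ℕ) (hn : 2 ≤ n)
    (w : FreeGroup (Fin s)) (hw : w ≠ 1) :
    ∃ h : Fin s → Matrix.SpecialLinearGroup (Fin n) K, FreeGroup.lift h w ≠ 1 := by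
  obtain ⟨ψ, hψ⟩ := exists_SL_embedding K n hn
  suffices ∃ h : Fin s → Matrix.SpecialLinearGroup (Fin 2) K, FreeGroup.lift h w ≠ 1 by
    obtain ⟨h, hh⟩ := this
    refine ⟨fun i => ψ (h i), ?_⟩
    have : FreeGroup.lift (fun i => ψ (h i)) = ψ.comp (FreeGroup.lift h) := by
      ext; simp
    rw [this]
    exact fun h' => hh (hψ (by simpa using h'))
  by_contra! hlaw
  obtain ⟨q, κ, hκ, -, h0, -, hq⟩ := exists_poly_orbit (K := K) w.toWord FreeGroup.isReduced_toWord
  set m := w.toWord.length with hm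
  have hm0 : m ≠ 0 := by
    intro h
    exact hw (FreeGroup.norm_eq_zero.1 h)
  have hne : ∀ i : Fin s, slopeOf K (i, true) ≠ slopeOf K (i, false) := by
    intro i h
    simpa using slopeOf_injective h
  have heval : ∀ t : K, t ≠ 0 → (q 0 - X ^ m).eval t = 0 := by
    intro t ht
    let h : Fin s → Matrix.SpecialLinearGroup (Fin 2) K := fun i =>
      ⟨hyp (slopeOf K (i, true)) (slopeOf K (i, false)) t, det_hyp (hne i) ht⟩
    have h1 := hlaw h
    rw [← FreeGroup.mk_toWord (x := w), FreeGroup.lift_mk] at h1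
    have h2 := congrArg (Matrix.SpecialLinearGroup.coeMonoidHom) h1
    rw [map_list_prod, List.map_map, map_one] at h2
    have h3 : (w.toWord.map fun y => hyp (slopeOf K y) (slopeOf K (y.1, !y.2)) t).prod = 1 := by
      rw [← h2]
      congr 1
      refine List.map_congr_left ?_
      rintro ⟨i, b⟩ -
      cases b
      · exact (adjugate_hyp (hne i) ht).symm
      · rfl
    have h4 := congrFun (hq t ht) 0
    rw [h3] at h4
    simp at h4
    simp [← h4]
  -- if `w` were a law, the polynomial `q 0` of degree `2 * m` would equal `X ^ m`
  have hz : q 0 - X ^ m = 0 := by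
    refine eq_zero_of_infinite_isRoot _ (Set.Infinite.mono (s := {0}ᶜ) ?_ ?_)
    · intro t ht
      exact heval t ht
    · exact (Set.finite_singleton (0 : K)).infinite_compl
  have := congrArg (fun p => p.coeff (2 * m)) hz
  simp [h0, coeff_X_pow, hm0, hκ] at this
end

/-! ### Every fibre is a proper subset -/

lemma det_mem_intermediateField {K L : Type} [Field K] [Field L] [Algebra K L]
    (E : IntermediateField K L) {n : ℕ} (M : Matrix (Fin n) (Fin n) L) (hM : ∀ a b, M a b ∈ E) :
    M.det ∈ E := by
  rw [Matrix.det_apply]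
  refine sum_mem fun σ _ => ?_
  rw [Units.smul_def]
  exact zsmul_mem (prod_mem fun i _ => hM _ _) _

/-- An injective homomorphism which inverts `δ` stays injective on the localization at `δ`. -/
lemma lift_away_injective {P R A : Type} [CommRing P] [IsDomain P] [CommRing R] [Algebra P R]
    [CommRing A] (δ : P) [IsLocalization.Away δ R] (f : P →+* A) (hf : Function.Injective f)
    (hδ : IsUnit (f δ)) : Function.Injective (IsLocalization.Away.lift (S := R) δ hδ) := by
  rw [injective_iff_map_eq_zero]
  intro r hr
  obtain ⟨⟨p, t⟩, hp⟩ := IsLocalization.surj (Submonoid.powers δ) r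
  have h1 := congrArg (IsLocalization.Away.lift (S := R) δ hδ) hp
  rw [map_mul, hr, zero_mul, IsLocalization.Away.lift_eq] at h1
  have h2 : p = 0 := hf (by rw [← h1, map_zero])
  rw [h2, map_zero] at hp
  exact (IsUnit.mul_left_eq_zero (IsLocalization.map_units R t)).1 hp

/-- A generic point of a fibre has transcendence degree less than `s * (n ^ 2 - 1)`. Otherwise,
after multiplying the first column of each `g i` by a new variable `τ i`, all `s * n ^ 2` entries
are algebraically independent, so the relation `w = g₀` holds for the universal invertible matrices
normalized to determinant one, hence at every point of `SL_n(K)^s`, against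
`exists_SL_lift_ne_one`. -/
theorem lt_of_generic_point (K : Type) [Field K] [CharZero K] (s n : ℕ) (hn : 2 ≤ n)
    (w : FreeGroup (Fin s)) (hw : w ≠ 1) (g₀ : Matrix.SpecialLinearGroup (Fin n) K) (D : ℕ)
    (L : Type) [Field L] [Algebra K L] (g : Fin s → Matrix.SpecialLinearGroup (Fin n) L)
    (y : Fin D → L) (hy : AlgebraicIndependent K y)
    (hgen : ∀ E : IntermediateField K L, (∀ i a b, (g i).1 a b ∈ E) → E = ⊤)
    (hg : FreeGroup.lift g w = g₀.map (algebraMap K L)) : D + s < s * n ^ 2 := by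
  by_contra! hle
  have : NeZero n := ⟨by omega⟩
  let L' := FractionRing (MvPolynomial (Fin s) L)
  let τ : Fin s → L' := fun i => algebraMap (MvPolynomial (Fin s) L) L' (MvPolynomial.X i)
  have hτ : AlgebraicIndependent L τ :=
    (MvPolynomial.algebraicIndependent_X (Fin s) L).map'
      (f := IsScalarTower.toAlgHom L (MvPolynomial (Fin s) L) L')
      (IsFractionRing.injective (MvPolynomial (Fin s) L) L')
  have hτ0 : ∀ i, τ i ≠ 0 := hτ.ne_zero
  have hz : AlgebraicIndependent K (Sum.elim τ (algebraMap L L' ∘ y)) :=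
    AlgebraicIndependent.sumElim_comp hy hτ
  -- `dg b` is the diagonal matrix `diag(b, 1, …, 1)`
  let dg : ∀ {B : Type} [CommRing B], B → Matrix (Fin n) (Fin n) B :=
    fun b => Matrix.diagonal fun a => if a = 0 then b else 1
  have hdg : ∀ {B : Type} [CommRing B] (b : B), (dg b).det = b := by
    intro B _ b
    simp [dg, Matrix.det_diagonal]
  have hdgmul : ∀ {B : Type} [CommRing B] (b c : B), dg b * dg c = dg (b * c) := by
    intro B _ b c
    simp only [dg, Matrix.diagonal_mul_diagonal]
    congr 1
    ext a
    split_ifs <;> simp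
  have hdg1 : ∀ {B : Type} [CommRing B], dg (1 : B) = 1 := by
    intro B _
    simp [dg]
  have hdgmap : ∀ {B C : Type} [CommRing B] [CommRing C] (f : B →+* C) (b : B),
      (dg b).map f = dg (f b) := by
    intro B C _ _ f b
    simp only [dg]
    rw [Matrix.diagonal_map (map_zero f)]
    congr 1
    ext a
    split_ifs <;> simp
  let H : Fin s → Matrix (Fin n) (Fin n) L' := fun i => (g i).1.map (algebraMap L L') * dg (τ i)
  have hHdet : ∀ i, (H i).det = τ i := by
    intro i
    have : ((g i).1.map (algebraMap L L')).det = 1 := by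
      rw [← RingHom.mapMatrix_apply, ← RingHom.map_det, (g i).2, map_one]
    simp only [H, Matrix.det_mul, hdg, this, one_mul]
  let h : Fin s × Fin n × Fin n → L' := fun x => H x.1 x.2.1 x.2.2
  have htop : IntermediateField.adjoin K (Set.range h) = ⊤ := by
    set E := IntermediateField.adjoin K (Set.range h) with hE
    have hHE : ∀ i a b, H i a b ∈ E := fun i a b =>
      IntermediateField.subset_adjoin K _ ⟨(i, a, b), rfl⟩
    have hτE : ∀ i, τ i ∈ E := fun i => by
      rw [← hHdet i]; exact det_mem_intermediateField E _ (hHE i)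
    have hgE : ∀ i a b, algebraMap L L' ((g i).1 a b) ∈ E := by
      intro i a b
      have h1 : H i a b = algebraMap L L' ((g i).1 a b) * (if b = 0 then τ i else 1) := by
        simp [H, dg, Matrix.mul_diagonal]
      have h2 : algebraMap L L' ((g i).1 a b) = H i a b / (if b = 0 then τ i else 1) := by
        rw [h1, mul_div_cancel_right₀]
        split_ifs
        · exact hτ0 i
        · exact one_ne_zero
      rw [h2]
      refine div_mem (hHE i a b) ?_
      split_ifs
      · exact hτE i
      · exact one_mem E
    have hLE : ∀ a : L, algebraMap L L' a ∈ E := by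
      have := hgen (E.comap (IsScalarTower.toAlgHom K L L')) hgE
      intro a
      have ha : a ∈ (⊤ : IntermediateField K L) := trivial
      rw [← this] at ha
      exact ha
    have hPE : ∀ p : MvPolynomial (Fin s) L, algebraMap _ L' p ∈ E := by
      intro p
      induction p using MvPolynomial.induction_on with
      | C a => exact hLE a
      | add p q hp hq => rw [map_add]; exact add_mem hp hq
      | mul_X p i hp => rw [map_mul]; exact mul_mem hp (hτE i)
    rw [eq_top_iff]
    intro x _
    obtain ⟨a, b, hb, rfl⟩ := IsFractionRing.div_surjective (A := MvPolynomial (Fin s) L) x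
    exact div_mem (hPE a) (hPE b)
  have hind : AlgebraicIndependent K h := by
    refine algebraicIndependent_of_adjoin_eq_top hz htop ?_
    simp only [Fintype.card_prod, Fintype.card_sum, Fintype.card_fin]
    rw [← pow_two]; omega
  -- the universal tuple `X`, over the ring `R` in which its determinants are invertible, and its
  -- normalization `G` to determinant one
  let P := MvPolynomial (Fin s × Fin n × Fin n) K
  let X : Fin s → Matrix (Fin n) (Fin n) P :=
    fun i => Matrix.of fun a b => MvPolynomial.X (i, a, b)
  let δ : P := ∏ i, (X i).det
  let R := Localization.Away δ
  have hX1 : ∀ {B : Type} [CommRing B] [Algebra K B] (M : Fin s → Matrix (Fin n) (Fin n) B) i,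
      (X i).map (MvPolynomial.aeval fun x => M x.1 x.2.1 x.2.2 : P →ₐ[K] B) = M i := by
    intro B _ _ M i
    ext a b
    simp [X]
  have hX2 : ∀ {B : Type} [CommRing B] [Algebra K B] (M : Fin s → Matrix (Fin n) (Fin n) B) i,
      (MvPolynomial.aeval fun x => M x.1 x.2.1 x.2.2 : P →ₐ[K] B) (X i).det = (M i).det := by
    intro B _ _ M i
    rw [AlgHom.map_det, AlgHom.mapMatrix_apply, hX1]
  have hunit : ∀ i, ∃ u : R, algebraMap P R (X i).det * u = 1 := by
    intro i
    have : IsUnit (algebraMap P R (X i).det) := by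
      refine isUnit_of_dvd_unit ((algebraMap P R).map_dvd (Finset.dvd_prod_of_mem
        (fun i => (X i).det) (Finset.mem_univ i))) ?_
      exact IsLocalization.Away.algebraMap_isUnit δ
    exact this.exists_right_inv
  choose u hu using hunit
  let G : Fin s → Matrix.SpecialLinearGroup (Fin n) R := fun i =>
    ⟨(X i).map (algebraMap P R) * dg (u i), by
      rw [Matrix.det_mul, hdg, ← RingHom.mapMatrix_apply, ← RingHom.map_det, hu]⟩
  have spec : ∀ {B : Type} [CommRing B] [Algebra K B] (M : Fin s → Matrix (Fin n) (Fin n) B)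
      (f : R →+* B) (_ : ∀ p, f (algebraMap P R p) =
        (MvPolynomial.aeval fun x => M x.1 x.2.1 x.2.2 : P →ₐ[K] B) p)
      (g' : Fin s → Matrix.SpecialLinearGroup (Fin n) B)
      (_ : ∀ i, M i = (g' i).1 * dg (M i).det),
      ∀ i, (G i).map f = g' i := by
    intro B _ _ M f hf g' hM
    refine fun i => Subtype.ext ?_
    change ((X i).map (algebraMap P R) * dg (u i)).map f = _
    have h1 : ((X i).map (algebraMap P R)).map f = M i := by
      rw [Matrix.map_map, ← hX1 M i]
      ext a b
      exact hf _
    have h2 := congrArg f (hu i)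
    rw [map_mul, hf, hX2, map_one] at h2
    rw [Matrix.map_mul, h1, hdgmap]
    conv_lhs => rw [hM i]
    rw [Matrix.mul_assoc, hdgmul, h2, hdg1, mul_one]
  have specC : ∀ {B : Type} [CommRing B] [Algebra K B] (M : Fin s → Matrix (Fin n) (Fin n) B)
      (f : R →+* B) (_ : ∀ p, f (algebraMap P R p) =
        (MvPolynomial.aeval fun x => M x.1 x.2.1 x.2.2 : P →ₐ[K] B) p),
      (g₀.map (algebraMap K R)).map f = g₀.map (algebraMap K B) := by
    intro B _ _ M f hf
    ext a b
    change f (algebraMap K R _) = algebraMap K B _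
    rw [IsScalarTower.algebraMap_apply K P R, hf, AlgHom.commutes]
  -- transported to `L'` the identity becomes the relation satisfied by `g`, and the map from `R` to
  -- `L'` is injective because the entries `h` are independent
  have huniv : FreeGroup.lift G w = g₀.map (algebraMap K R) := by
    have hδ : IsUnit ((MvPolynomial.aeval h : P →ₐ[K] L').toRingHom δ) := by
      change IsUnit ((MvPolynomial.aeval h : P →ₐ[K] L') (∏ i, (X i).det))
      rw [map_prod]
      refine IsUnit.mk0 _ (Finset.prod_ne_zero_iff.2 fun i _ => ?_)
      rw [hX2 H, hHdet]
      exact hτ0 i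
    let f := IsLocalization.Away.lift (S := R) δ hδ
    have hfinj : Function.Injective f := lift_away_injective δ _ hind hδ
    have hf : ∀ p, f (algebraMap P R p) = (MvPolynomial.aeval h : P →ₐ[K] L') p :=
      fun p => IsLocalization.Away.lift_eq δ hδ p
    have h1 := spec H f hf (fun i => (g i).map (algebraMap L L')) (fun i => by rw [hHdet i]; rfl)
    have h2 := lift_map (Matrix.SpecialLinearGroup.map f) G w
    simp_rw [h1] at h2
    rw [lift_map, hg] at h2
    have h3 := specC H f hf
    have h4 : (Matrix.SpecialLinearGroup.map f) (FreeGroup.lift G w) =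
        (Matrix.SpecialLinearGroup.map f) (g₀.map (algebraMap K R)) := by
      rw [← h2, h3]
      ext a b
      exact (IsScalarTower.algebraMap_apply K L L' _).symm
    ext a b
    exact hfinj (congrArg (fun M : Matrix.SpecialLinearGroup (Fin n) L' => M.1 a b) h4)
  -- specializing the identity over `R` at an arbitrary tuple over `K`
  have hall : ∀ g' : Fin s → Matrix.SpecialLinearGroup (Fin n) K, FreeGroup.lift g' w = g₀ := by
    intro g'
    let e : P →ₐ[K] K := MvPolynomial.aeval fun x => (g' x.1).1 x.2.1 x.2.2
    have hδ : IsUnit (e.toRingHom δ) := by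
      change IsUnit (e (∏ i, (X i).det))
      rw [map_prod]
      refine IsUnit.mk0 _ (Finset.prod_ne_zero_iff.2 fun i _ => ?_)
      rw [hX2 fun i => (g' i).1, (g' i).2]
      exact one_ne_zero
    let f := IsLocalization.Away.lift (S := R) δ hδ
    have hf : ∀ p, f (algebraMap P R p) = e p := fun p => IsLocalization.Away.lift_eq δ hδ p
    have h1 := spec (fun i => (g' i).1) f hf g' (fun i => by rw [(g' i).2, hdg1, mul_one])
    have h2 := lift_map (Matrix.SpecialLinearGroup.map f) G w
    simp_rw [h1] at h2
    rw [huniv, specC (fun i => (g' i).1) f hf] at h2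
    rw [h2]
    rfl
  obtain ⟨h', hh'⟩ := exists_SL_lift_ne_one K s n hn w hw
  apply hh'
  rw [hall h', ← hall 1]
  have := lift_map (1 : Matrix.SpecialLinearGroup (Fin n) K →* Matrix.SpecialLinearGroup (Fin n) K)
    1 w
  simpa [Pi.one_def] using this

/-! ### Trajectories of row vectors along the word -/

section trajectories

open Matrix

variable {L : Type} [Field L] {s n : ℕ}

/-- The inverse of a letter, in the encoding of `FreeGroup.toWord` where `(i, true)` is the `i`-th
generator and `(i, false)` its inverse. -/
def letterInv (y : Fin s × Bool) : Fin s × Bool := (y.1, !y.2)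

@[simp] lemma letterInv_letterInv (y : Fin s × Bool) : letterInv (letterInv y) = y := by
  simp [letterInv]

lemma letterInv_ne (y : Fin s × Bool) : letterInv y ≠ y := by
  intro h
  have := congrArg Prod.snd h
  simp [letterInv] at this

/-- The value of a letter at a tuple `g`. -/
def letterVal (g : Fin s → SpecialLinearGroup (Fin n) L) (y : Fin s × Bool) :
    SpecialLinearGroup (Fin n) L := bif y.2 then g y.1 else (g y.1)⁻¹

lemma letterVal_letterInv (g : Fin s → SpecialLinearGroup (Fin n) L) (y : Fin s × Bool) :
    letterVal g (letterInv y) = (letterVal g y)⁻¹ := by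
  obtain ⟨i, b⟩ := y
  cases b <;> simp [letterVal, letterInv]

lemma vecMul_letter_letterInv (g : Fin s → SpecialLinearGroup (Fin n) L) (y : Fin s × Bool)
    (v : Fin n → L) :
    (v ᵥ* (letterVal g y).1) ᵥ* (letterVal g (letterInv y)).1 = v := by
  have h : (letterVal g y).1 * ((letterVal g y)⁻¹).1 = 1 :=
    congrArg Subtype.val (mul_inv_cancel (letterVal g y))
  rw [vecMul_vecMul, letterVal_letterInv, h, vecMul_one]

variable (K : Type) [Field K] [Algebra K L]

/-- Partial knowledge of a tuple `g`. For each letter `y` the finset `S y` consists of linearly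
independent row vectors `v` for which both `v` and its image under `letterVal g y` have entries in
the field generated over `K` by `T`. The image of `S y` lies in the family of the inverse letter, so
rationality of images need not be recorded separately. -/
structure Revealed (g : Fin s → SpecialLinearGroup (Fin n) L) (T : Finset L)
    (S : Fin s × Bool → Finset (Fin n → L)) : Prop where
  rat : ∀ y, ∀ v ∈ S y, ∀ a, v a ∈ IntermediateField.adjoin K (T : Set L)
  indep : ∀ y, LinearIndepOn L id (S y : Set (Fin n → L))
  img : ∀ y, ∀ v ∈ S y, v ᵥ* (letterVal g y).1 ∈ S (letterInv y)

variable {K}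

lemma adjoin_mono' {T T' : Finset L} (h : T ⊆ T') :
    IntermediateField.adjoin K (T : Set L) ≤ IntermediateField.adjoin K (T' : Set L) :=
  IntermediateField.adjoin.mono K _ _ (by exact_mod_cast h)

/-- The image of a vector which is new for the letter `y` is new for the inverse letter. -/
lemma Revealed.not_mem_span_image {g : Fin s → SpecialLinearGroup (Fin n) L} {T : Finset L}
    {S : Fin s × Bool → Finset (Fin n → L)} (hS : Revealed K g T S) {y : Fin s × Bool}
    {u : Fin n → L} (hu : u ∉ Submodule.span L (S y : Set (Fin n → L))) :
    u ᵥ* (letterVal g y).1 ∉ Submodule.span L (S (letterInv y) : Set (Fin n → L)) := by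
  intro h
  apply hu
  have h1 := Submodule.mem_map_of_mem (f := (letterVal g (letterInv y)).1.vecMulLinear) h
  rw [Submodule.map_span] at h1
  simp only [vecMulLinear_apply, vecMul_letter_letterInv] at h1
  refine Submodule.span_mono ?_ h1
  rintro _ ⟨v, hv, rfl⟩
  have := hS.img _ v hv
  rwa [letterInv_letterInv] at this

open Classical in
/-- Reveal the image of a new vector `u` under the letter `y`: `u` is added to the family of `y` and
its image to the family of the inverse letter. -/
lemma Revealed.step {g : Fin s → SpecialLinearGroup (Fin n) L} {T T' : Finset L}
    {S : Fin s × Bool → Finset (Fin n → L)} (hS : Revealed K g T S) (hT : T ⊆ T')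
    {y : Fin s × Bool} {u : Fin n → L} (hu : u ∉ Submodule.span L (S y : Set (Fin n → L)))
    (hur : ∀ a, u a ∈ IntermediateField.adjoin K (T : Set L))
    (hur' : ∀ a, (u ᵥ* (letterVal g y).1) a ∈ IntermediateField.adjoin K (T' : Set L)) :
    ∃ S' : Fin s × Bool → Finset (Fin n → L), Revealed K g T' S' ∧
      ∑ z, (S' z).card = ∑ z, (S z).card + 2 ∧
      ∀ z, z ≠ letterInv y → S' z ⊆ insert u (S z) := by
  set u' := u ᵥ* (letterVal g y).1 with hu'
  have hnu' := hS.not_mem_span_image hu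
  have hyi := letterInv_ne y
  refine ⟨fun z => if z = y then insert u (S z) else if z = letterInv y then insert u' (S z)
    else S z, ⟨?_, ?_, ?_⟩, ?_, ?_⟩
  · intro z v hv a
    have hle := adjoin_mono' (K := K) hT
    split_ifs at hv with h1 h2
    · rcases Finset.mem_insert.1 hv with rfl | hv
      · exact hle (hur a)
      · exact hle (hS.rat z v hv a)
    · rcases Finset.mem_insert.1 hv with rfl | hv
      · exact hur' a
      · exact hle (hS.rat z v hv a)
    · exact hle (hS.rat z v hv a)
  · intro z
    split_ifs with h1 h2
    · rw [Finset.coe_insert]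
      subst h1
      exact (hS.indep z).id_insert hu
    · rw [Finset.coe_insert]
      subst h2
      exact (hS.indep _).id_insert hnu'
    · exact hS.indep z
  · intro z v hv
    have hz := hS.img z v
    by_cases h1 : z = y
    · subst h1
      simp only [if_pos, if_neg hyi] at hv ⊢
      rcases Finset.mem_insert.1 hv with rfl | hv
      · exact Finset.mem_insert_self _ _
      · exact Finset.mem_insert_of_mem (hz hv)
    · by_cases h2 : z = letterInv y
      · subst h2
        simp only [if_pos, if_neg hyi, letterInv_letterInv] at hv hz ⊢
        rcases Finset.mem_insert.1 hv with rfl | hv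
        · rw [hu', vecMul_letter_letterInv]
          exact Finset.mem_insert_self _ _
        · exact Finset.mem_insert_of_mem (hz hv)
      · have h3 : letterInv z ≠ y := fun h => h2 (by rw [← h, letterInv_letterInv])
        have h4 : letterInv z ≠ letterInv y := fun h => h1 (by
          rw [← letterInv_letterInv z, h, letterInv_letterInv])
        rw [if_neg h1, if_neg h2] at hv
        rw [if_neg h3, if_neg h4]
        exact hz hv
  · have hcard : ∀ z, (if z = y then insert u (S z) else if z = letterInv y then insert u' (S z)
        else S z).card = (S z).card + ((if z = y then 1 else 0) +
          (if z = letterInv y then 1 else 0)) := by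
      intro z
      split_ifs with h1 h2 h2
      · exact absurd (h2.symm.trans h1) hyi
      · rw [Finset.card_insert_of_notMem]
        subst h1
        exact fun h => hu (Submodule.subset_span h)
      · rw [Finset.card_insert_of_notMem]
        subst h2
        exact fun h => hnu' (Submodule.subset_span h)
      · rfl
    rw [Finset.sum_congr rfl fun z _ => hcard z, Finset.sum_add_distrib, Finset.sum_add_distrib]
    simp
  · intro z hz
    beta_reduce
    rw [if_neg hz]
    split_ifs
    · exact subset_rfl
    · exact Finset.subset_insert _ _

open Classical in
/-- A linear combination of the vectors in `X` becomes rational after adjoining at most `X.card`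
elements, its coefficients. -/
lemma exists_coeffs {T : Finset L} {X : Finset (Fin n → L)} {u : Fin n → L}
    (hX : ∀ v ∈ X, ∀ a, v a ∈ IntermediateField.adjoin K (T : Set L))
    (hu : u ∈ Submodule.span L (X : Set (Fin n → L))) :
    ∃ T' : Finset L, T ⊆ T' ∧ T'.card ≤ T.card + X.card ∧
      ∀ a, u a ∈ IntermediateField.adjoin K (T' : Set L) := by
  obtain ⟨f, -, rfl⟩ := Submodule.mem_span_finset.1 hu
  refine ⟨T ∪ X.image f, Finset.subset_union_left, ?_, ?_⟩
  · exact (Finset.card_union_le _ _).trans (Nat.add_le_add_left Finset.card_image_le _)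
  · intro a
    rw [Finset.sum_apply]
    refine sum_mem fun v hv => ?_
    rw [Pi.smul_apply, smul_eq_mul]
    refine mul_mem (IntermediateField.subset_adjoin K _ ?_)
      (adjoin_mono' Finset.subset_union_left (hX v hv a))
    exact_mod_cast Finset.mem_union_right _ (Finset.mem_image_of_mem f hv)

open Classical in
/-- A step whose result is a combination of vectors already met is cheap: it costs at most
`∑ z, (S z).card + 2` new elements, which is `∑ z, (S' z).card`. -/
lemma Revealed.step_dependent {g : Fin s → SpecialLinearGroup (Fin n) L} {T : Finset L}
    {S : Fin s × Bool → Finset (Fin n → L)} (hS : Revealed K g T S) {f : Fin n → L}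
    (hf : ∀ a, f a ∈ (⊥ : IntermediateField K L))
    {y : Fin s × Bool} {u : Fin n → L} (hu : u ∉ Submodule.span L (S y : Set (Fin n → L)))
    (hur : ∀ a, u a ∈ IntermediateField.adjoin K (T : Set L))
    (hW : u ᵥ* (letterVal g y).1 ∈ Submodule.span L
      ((insert u (insert f (Finset.univ.biUnion S)) : Finset (Fin n → L)) : Set (Fin n → L))) :
    ∃ (T' : Finset L) (S' : Fin s × Bool → Finset (Fin n → L)),
        Revealed K g T' S' ∧ ∑ z, (S' z).card = ∑ z, (S z).card + 2 ∧
        T'.card ≤ T.card + ∑ z, (S' z).card := by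
  have hX : ∀ v ∈ insert u (insert f (Finset.univ.biUnion S)), ∀ a,
      v a ∈ IntermediateField.adjoin K (T : Set L) := by
    intro v hv a
    rcases Finset.mem_insert.1 hv with rfl | hv
    · exact hur a
    rcases Finset.mem_insert.1 hv with rfl | hv
    · exact bot_le (a := IntermediateField.adjoin K (T : Set L)) (hf a)
    · obtain ⟨z, -, hz⟩ := Finset.mem_biUnion.1 hv
      exact hS.rat z v hz a
  obtain ⟨T', hT, hc, hr⟩ := exists_coeffs hX hW
  obtain ⟨S', h1, h2, -⟩ := hS.step hT hu hur hr
  refine ⟨T', S', h1, h2, hc.trans ?_⟩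
  have h3 := Finset.card_insert_le u (insert f (Finset.univ.biUnion S))
  have h4 := Finset.card_insert_le f (Finset.univ.biUnion S)
  have h5 : (Finset.univ.biUnion S).card ≤ _ := Finset.card_biUnion_le
  omega

open Classical in
/-- Follow `u` along the reduced word `y :: l`, whose value maps `u` to the `K`-rational vector `f`,
until the first step landing in the span of the vectors met before. This takes `t ≥ 1` steps, of which
`t - 1` cost at most `n` elements each, and the last one only `∑ z, (S' z).card`. -/
theorem exists_revealed_trajectory {g : Fin s → SpecialLinearGroup (Fin n) L} (f : Fin n → L)
    (hf : ∀ a, f a ∈ (⊥ : IntermediateField K L)) (l : List (Fin s × Bool)) :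
    ∀ (y : Fin s × Bool) (_ : FreeGroup.IsReduced (y :: l)) (T : Finset L)
      (S : Fin s × Bool → Finset (Fin n → L)) (_ : Revealed K g T S) (u : Fin n → L)
      (_ : u ∉ Submodule.span L (S y : Set (Fin n → L)))
      (_ : ∀ a, u a ∈ IntermediateField.adjoin K (T : Set L))
      (_ : u ᵥ* (((y :: l).map (letterVal g)).prod).1 = f),
      ∃ (t : ℕ) (T' : Finset L) (S' : Fin s × Bool → Finset (Fin n → L)), t ≤ l.length + 1 ∧
        Revealed K g T' S' ∧ ∑ z, (S' z).card = ∑ z, (S z).card + 2 * t ∧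
        T'.card + n ≤ T.card + n * t + ∑ z, (S' z).card := by
  induction l with
  | nil =>
    intro y hred T S hS u hu hur huf
    have huf' : u ᵥ* (letterVal g y).1 = f := by
      rw [← huf]; simp
    obtain ⟨T', S', h1, h2, h3⟩ := hS.step_dependent hf hu hur (by
      rw [huf']; exact Submodule.subset_span (by simp))
    exact ⟨1, T', S', by simp, h1, by omega, by omega⟩
  | cons y' l ih =>
    intro y hred T S hS u hu hur huf
    by_cases hW : u ᵥ* (letterVal g y).1 ∈ Submodule.span L
      ((insert u (insert f (Finset.univ.biUnion S)) : Finset (Fin n → L)) : Set (Fin n → L))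
    · obtain ⟨T', S', h1, h2, h3⟩ := hS.step_dependent hf hu hur hW
      exact ⟨1, T', S', by simp, h1, by omega, by omega⟩
    · have hr : ∀ a, (u ᵥ* (letterVal g y).1) a ∈ IntermediateField.adjoin K
          ((T ∪ Finset.univ.image (u ᵥ* (letterVal g y).1) : Finset L) : Set L) := by
        intro a
        apply IntermediateField.subset_adjoin
        simp
      obtain ⟨S', h1, h2, h3⟩ := hS.step Finset.subset_union_left hu hur hr
      rw [FreeGroup.isReduced_cons_cons] at hred
      have hy : y' ≠ letterInv y := by
        rintro rfl
        have := hred.1 rfl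
        simp [letterInv] at this
      -- since `y'` is not the inverse of `y`, the family of `y'` has gained at most the vector `u`
      have hn : u ᵥ* (letterVal g y).1 ∉ Submodule.span L (S' y' : Set (Fin n → L)) := by
        intro h
        apply hW
        refine Submodule.span_mono ?_ h
        intro v hv
        have := h3 y' hy hv
        rw [Finset.mem_insert] at this
        simp only [Finset.coe_insert, Set.mem_insert_iff, Finset.mem_coe, Finset.mem_biUnion,
          Finset.mem_univ, true_and]
        rcases this with h | h
        · exact Or.inl h
        · exact Or.inr (Or.inr ⟨y', h⟩)
      have hc : (T ∪ Finset.univ.image (u ᵥ* (letterVal g y).1)).card ≤ T.card + n := by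
        refine (Finset.card_union_le _ _).trans (Nat.add_le_add_left ?_ _)
        exact Finset.card_image_le.trans (by simp)
      obtain ⟨t, T'', S'', k1, k2, k3, k4⟩ := ih y' hred.2 _ S' h1 _ hn hr (by
        rw [← huf, vecMul_vecMul, List.map_cons (l := y' :: l), List.prod_cons]
        rfl)
      refine ⟨t + 1, T'', S'', by simpa using k1, k2, by omega, ?_⟩
      rw [mul_add]; omega

open Classical in
/-- Running `w` successively from `j ≤ k` new standard basis vectors reveals the images of `R` vectors
under the generators at a cost of `n * R` elements, less `n - 2 * k * w.norm` for each run. -/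
theorem exists_revealed {g : Fin s → SpecialLinearGroup (Fin n) L}
    (w : FreeGroup (Fin s)) (hw : w ≠ 1) (g₀ : SpecialLinearGroup (Fin n) K)
    (hg : FreeGroup.lift g w = g₀.map (algebraMap K L)) (k : ℕ) (hk : 2 * k * w.norm < n) :
    ∀ j ≤ k, ∃ (R : ℕ) (T : Finset L) (S : Fin s × Bool → Finset (Fin n → L)),
      Revealed K g T S ∧ ∑ z, (S z).card = 2 * R ∧ R ≤ j * w.norm ∧
      T.card + j * n ≤ n * R + j * (2 * k * w.norm) := by
  intro j
  induction j with
  | zero =>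
    intro _
    refine ⟨0, ∅, fun _ => ∅, ⟨by simp, by simp, by simp⟩, by simp, by simp, by simp⟩
  | succ j ih =>
    intro hj
    obtain ⟨R, T, S, hS, hR, hRj, hT⟩ := ih (by omega)
    have hjk : (j + 1) * w.norm ≤ k * w.norm := Nat.mul_le_mul_right _ hj
    have hRk : 2 * R < n := by
      have : j * w.norm ≤ k * w.norm := Nat.mul_le_mul_right _ (by omega)
      have : 2 * k * w.norm = 2 * (k * w.norm) := by ring
      omega
    have hcard : (Finset.univ.biUnion S).card < n := by
      have h5 : (Finset.univ.biUnion S).card ≤ _ := Finset.card_biUnion_le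
      omega
    -- a standard basis vector outside the span of everything revealed so far
    obtain ⟨e, he⟩ : ∃ e : Fin n, (Pi.single e 1 : Fin n → L) ∉ Submodule.span L
        ((Finset.univ.biUnion S : Finset (Fin n → L)) : Set (Fin n → L)) := by
      by_contra! hcon
      have htop : Submodule.span L
          ((Finset.univ.biUnion S : Finset (Fin n → L)) : Set (Fin n → L)) = ⊤ := by
        rw [eq_top_iff, ← (Pi.basisFun L (Fin n)).span_eq, Submodule.span_le]
        rintro _ ⟨e, rfl⟩
        simpa using hcon e
      have h1 := finrank_span_finset_le_card (R := L) (Finset.univ.biUnion S)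
      rw [Set.finrank, htop, finrank_top, Module.finrank_fin_fun] at h1
      omega
    obtain ⟨y, l, hyl⟩ : ∃ y l, w.toWord = y :: l := by
      rcases h : w.toWord with _ | ⟨y, l⟩
      · exact absurd (FreeGroup.toWord_eq_nil_iff.1 h) hw
      · exact ⟨y, l, rfl⟩
    have hlen : l.length + 1 = w.norm := by
      rw [FreeGroup.norm, hyl, List.length_cons]
    have hprod : ((y :: l).map (letterVal g)).prod = g₀.map (algebraMap K L) := by
      rw [← hg, ← hyl]
      conv_rhs => rw [← FreeGroup.mk_toWord (x := w), FreeGroup.lift_mk]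
      rfl
    have hsing : ∀ a, (Pi.single e 1 : Fin n → L) a ∈ (⊥ : IntermediateField K L) := by
      intro a
      by_cases h : a = e
      · subst h; simp [one_mem]
      · simp [h, zero_mem]
    obtain ⟨t, T', S', h1, h2, h3, h4⟩ := exists_revealed_trajectory (K := K) (g := g)
      ((Pi.single e 1 : Fin n → L) ᵥ* (g₀.map (algebraMap K L)).1) (by
        intro a
        rw [single_one_vecMul]
        exact (⊥ : IntermediateField K L).algebraMap_mem (g₀.1 e a)) l y
      (hyl ▸ FreeGroup.isReduced_toWord) T S hS (Pi.single e 1)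
      (fun h => he (Submodule.span_mono (by
        intro v hv
        simp only [Finset.mem_coe, Finset.mem_biUnion, Finset.mem_univ, true_and]
        exact ⟨y, hv⟩) h))
      (fun a => bot_le (a := IntermediateField.adjoin K (T : Set L)) (hsing a))
      (by rw [hprod])
    have hRt : R + t ≤ (j + 1) * w.norm := by
      rw [add_mul]; omega
    refine ⟨R + t, T', S', h2, by omega, hRt, ?_⟩
    have : 2 * k * w.norm = 2 * (k * w.norm) := by ring
    rw [add_mul, add_mul, mul_add]
    omega

end trajectories

/-! ### Completing the matrices and counting parameters -/

section completion

open Matrix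

variable {K L : Type} [Field K] [Field L] [Algebra K L] {n : ℕ}

/-- Independent vectors over `E` can be completed to the rows of an invertible matrix over `E`, by
means of standard basis vectors. -/
lemma exists_rational_basis_matrix (E : IntermediateField K L) (S : Finset (Fin n → L))
    (hS : ∀ v ∈ S, ∀ a, v a ∈ E) (hi : LinearIndepOn L id (S : Set (Fin n → L))) :
    ∃ M : Matrix (Fin n) (Fin n) L, (∀ i a, M i a ∈ E) ∧ IsUnit M ∧
      ∃ I : Finset (Fin n), I.card = S.card ∧ ∀ i ∈ I, M i ∈ S := by
  classical
  obtain ⟨B, hBt, hSB, hB, hBi⟩ := exists_linearIndepOn_id_extension hi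
    (Set.subset_union_left (t := Set.range fun e : Fin n => (Pi.single e 1 : Fin n → L)))
  have hspan : ⊤ ≤ Submodule.span L (Set.range ((↑) : B → Fin n → L)) := by
    rw [Subtype.range_coe, ← (Pi.basisFun L (Fin n)).span_eq, Submodule.span_le]
    rintro _ ⟨e, rfl⟩
    exact hB (Or.inr ⟨e, by simp⟩)
  let b : Module.Basis B L (Fin n → L) := Module.Basis.mk hBi hspan
  let e : B ≃ Fin n := b.indexEquiv (Pi.basisFun L (Fin n))
  let M : Matrix (Fin n) (Fin n) L := Matrix.of fun i => (e.symm i : Fin n → L)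
  have hM : ∀ i, M i = (e.symm i : Fin n → L) := fun i => rfl
  refine ⟨M, ?_, ?_, Finset.univ.filter fun i => M i ∈ S, ?_, by simp⟩
  · intro i a
    rw [hM]
    rcases hBt (e.symm i).2 with h | ⟨j, h⟩
    · exact hS _ h a
    · rw [← h]
      by_cases h : a = j
      · subst h; simp [one_mem]
      · simp [h, zero_mem]
  · rw [← linearIndependent_rows_iff_isUnit]
    exact hBi.comp _ e.symm.injective
  · refine Finset.card_bij (fun i _ => M i) (by simp) ?_ ?_
    · intro i _ j _ hij
      exact e.symm.injective (Subtype.ext hij)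
    · intro v hv
      exact ⟨e ⟨v, hSB hv⟩, by simpa [hM] using hv, by simp [hM]⟩

/-- An entry with nonzero cofactor is determined by the other entries and the determinant, by Laplace
expansion. -/
lemma det_completion {F : IntermediateField K L} {N : Matrix (Fin n) (Fin n) L}
    (hd : N.det ∈ F) {i₀ a₀ : Fin n} (ha₀ : N.adjugate a₀ i₀ ≠ 0)
    (h : ∀ i a, (i, a) ≠ (i₀, a₀) → N i a ∈ F) : N i₀ a₀ ∈ F := by
  have hadj : ∀ a, N.adjugate a i₀ ∈ F := by
    intro a
    rw [adjugate_apply]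
    refine det_mem_intermediateField F _ fun i c => ?_
    rw [updateRow_apply]
    split_ifs with hi
    · by_cases hc : c = a
      · subst hc; simp [one_mem]
      · simp [hc, zero_mem]
    · exact h _ _ (by simp [hi])
  have h1 : N i₀ a₀ * N.adjugate a₀ i₀ + ∑ a ∈ Finset.univ.erase a₀, N i₀ a * N.adjugate a i₀
      = N.det := by
    rw [Finset.add_sum_erase _ (fun a => N i₀ a * N.adjugate a i₀) (Finset.mem_univ _),
      ← mul_apply, mul_adjugate]
    simp
  have h2 : N i₀ a₀ = (N.det - ∑ a ∈ Finset.univ.erase a₀, N i₀ a * N.adjugate a i₀) /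
      N.adjugate a₀ i₀ := by
    rw [← h1, add_sub_cancel_right, mul_div_cancel_right₀ _ ha₀]
  rw [h2]
  refine div_mem (sub_mem hd (sum_mem fun a ha => mul_mem (h _ _ ?_) (hadj a))) (hadj _)
  simpa using (Finset.mem_erase.1 ha).1

/-- A matrix of determinant one whose values on `r < n` independent vectors are known is determined by
`n * (n - r) - 1` further elements: in an adapted basis, the entries of the unknown rows
except one, which is obtained from the determinant. -/
lemma exists_completion (E : IntermediateField K L) (A : SpecialLinearGroup (Fin n) L)
    (S : Finset (Fin n → L)) (hS : ∀ v ∈ S, ∀ a, v a ∈ E)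
    (hi : LinearIndepOn L id (S : Set (Fin n → L)))
    (hA : ∀ v ∈ S, ∀ a, (v ᵥ* A.1) a ∈ E) (hn : S.card < n) :
    ∃ T : Finset L, T.card + 1 + n * S.card ≤ n ^ 2 ∧
      ∀ F : IntermediateField K L, E ≤ F → (∀ t ∈ T, t ∈ F) → ∀ a b, A.1 a b ∈ F := by
  classical
  obtain ⟨M, hM, hMu, I, hI, hIS⟩ := exists_rational_basis_matrix E S hS hi
  have hMd : IsUnit M.det := (isUnit_iff_isUnit_det M).1 hMu
  set N := M * A.1 with hN
  have hNd : N.det = M.det := by rw [hN, det_mul, A.2, mul_one]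
  have hNI : ∀ i ∈ I, ∀ a, N i a ∈ E := by
    intro i hi a
    have := hA _ (hIS i hi) a
    rwa [← mul_apply_eq_vecMul] at this
  obtain ⟨i₀, hi₀⟩ : ∃ i₀, i₀ ∉ I := by
    by_contra! h
    rw [Finset.eq_univ_iff_forall.2 h, Finset.card_univ, Fintype.card_fin] at hI
    omega
  obtain ⟨a₀, ha₀⟩ : ∃ a₀, N.adjugate a₀ i₀ ≠ 0 := by
    by_contra! h
    have h1 : (N * N.adjugate) i₀ i₀ = 0 := by
      rw [mul_apply]
      exact Finset.sum_eq_zero fun a _ => by rw [h a, mul_zero]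
    rw [mul_adjugate, hNd] at h1
    simp at h1
    exact hMd.ne_zero h1
  refine ⟨(((Finset.univ \ I) ×ˢ Finset.univ).erase (i₀, a₀)).image fun p => N p.1 p.2, ?_, ?_⟩
  · have h1 := Finset.card_image_le (s := ((Finset.univ \ I) ×ˢ Finset.univ).erase (i₀, a₀))
      (f := fun p : Fin n × Fin n => N p.1 p.2)
    have h2 : (((Finset.univ \ I) ×ˢ Finset.univ).erase (i₀, a₀)).card + 1 =
        (n - S.card) * n := by
      rw [Finset.card_erase_add_one (by simp [hi₀]), Finset.card_product,
        Finset.card_sdiff_of_subset (Finset.subset_univ _), hI]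
      simp
    have h3 : (n - S.card) * n + n * S.card = n ^ 2 := by
      rw [mul_comm n, ← add_mul, Nat.sub_add_cancel hn.le, sq]
    omega
  · intro F hEF hTF
    have hNF' : ∀ i a, (i, a) ≠ (i₀, a₀) → N i a ∈ F := by
      intro i a hia
      by_cases hiI : i ∈ I
      · exact hEF (hNI i hiI a)
      · refine hTF _ (Finset.mem_image.2 ⟨(i, a), ?_, rfl⟩)
        simp only [Finset.mem_erase, Finset.mem_product, Finset.mem_sdiff, Finset.mem_univ,
          true_and, and_true]
        exact ⟨hia, hiI⟩
    have hMdF : M.det ∈ F := hEF (det_mem_intermediateField E M hM)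
    have hNF : ∀ i a, N i a ∈ F := by
      intro i a
      by_cases hia : (i, a) = (i₀, a₀)
      · obtain ⟨rfl, rfl⟩ := Prod.mk.inj hia
        exact det_completion (hNd ▸ hMdF) ha₀ hNF'
      · exact hNF' i a hia
    intro a b
    have h1 : M.det * A.1 a b = (M.adjugate * N) a b := by
      rw [hN, ← mul_assoc, adjugate_mul, smul_mul, one_mul, Matrix.smul_apply, smul_eq_mul]
    have h2 : A.1 a b = (M.adjugate * N) a b / M.det := by
      rw [← h1, mul_div_cancel_left₀ _ hMd.ne_zero]
    rw [h2, mul_apply]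
    refine div_mem (sum_mem fun c _ => mul_mem ?_ (hNF c b)) hMdF
    rw [adjugate_apply]
    refine det_mem_intermediateField F _ fun i d => ?_
    rw [updateRow_apply]
    split_ifs with hi
    · by_cases hc : d = a
      · subst hc; simp [one_mem]
      · simp [hc, zero_mem]
    · exact hEF (hM _ _)

open Classical in
/-- The parameter count: `L` is generated by the elements spent in the `k` runs and those completing
each `g x`. -/
theorem dim_add_le_of_length_lt {s D : ℕ} {g : Fin s → SpecialLinearGroup (Fin n) L}
    {y : Fin D → L} (hy : AlgebraicIndependent K y)
    (hgen : ∀ E : IntermediateField K L, (∀ i a b, (g i).1 a b ∈ E) → E = ⊤)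
    (w : FreeGroup (Fin s)) (hw : w ≠ 1) (g₀ : SpecialLinearGroup (Fin n) K)
    (hg : FreeGroup.lift g w = g₀.map (algebraMap K L)) (k : ℕ) (hk : 2 * k * w.norm < n) :
    D + s + k * n ≤ s * n ^ 2 + k * (2 * k * w.norm) := by
  obtain ⟨R, T, S, hS, hR, hRk, hT⟩ := exists_revealed w hw g₀ hg k hk k le_rfl
  -- multiplication by `g x` identifies the two families attached to `x` and its inverse
  have hle : ∀ z, (S z).card ≤ (S (letterInv z)).card := by
    intro z
    refine Finset.card_le_card_of_injOn (fun v => v ᵥ* (letterVal g z).1) (hS.img z) ?_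
    intro v _ v' _ h
    have := congrArg (fun u => u ᵥ* (letterVal g (letterInv z)).1) h
    simpa only [vecMul_letter_letterInv] using this
  have heq : ∀ x, (S (x, false)).card = (S (x, true)).card :=
    fun x => le_antisymm (hle (x, false)) (hle (x, true))
  have hsum : ∑ x, (S (x, true)).card = R := by
    rw [Fintype.sum_prod_type] at hR
    simp only [Fintype.sum_bool, heq, ← two_mul] at hR
    rw [← Finset.mul_sum] at hR
    omega
  have hlt : ∀ x, (S (x, true)).card < n := by
    intro x
    have h1 := Finset.single_le_sum (f := fun x => (S (x, true)).card) (fun _ _ => Nat.zero_le _)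
      (Finset.mem_univ x)
    have h2 : 2 * k * w.norm = 2 * (k * w.norm) := by ring
    omega
  have hcomp := fun x => exists_completion (IntermediateField.adjoin K (T : Set L)) (g x)
    (S (x, true)) (hS.rat _) (hS.indep _)
    (fun v hv => hS.rat _ _ (hS.img (x, true) v hv)) (hlt x)
  choose T₁ hT₁ hF using hcomp
  have hD := card_le_of_adjoin_eq_top hy (T ∪ Finset.univ.biUnion T₁) (by
    refine hgen _ fun i a b => hF i _ (adjoin_mono' Finset.subset_union_left) ?_ a b
    intro t ht
    refine IntermediateField.subset_adjoin K _ ?_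
    simp only [Finset.coe_union, Set.mem_union, Finset.mem_coe, Finset.mem_biUnion,
      Finset.mem_univ, true_and]
    exact Or.inr ⟨i, ht⟩)
  have h1 := Finset.card_union_le T (Finset.univ.biUnion T₁)
  have h2 : (Finset.univ.biUnion T₁).card ≤ _ := Finset.card_biUnion_le
  have h3 := Finset.sum_le_sum fun x (_ : x ∈ Finset.univ) => hT₁ x
  rw [Finset.sum_add_distrib, Finset.sum_add_distrib, ← Finset.mul_sum, hsum] at h3
  simp only [Finset.sum_const, Finset.card_univ, Fintype.card_fin, smul_eq_mul, mul_one] at h3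
  omega

end completion

/-! ### Numerical bounds -/

/-- The numerical bound for `k` with `8 k l ≤ n < 16 k l`: the codimension is at least
`k n - 2 k² l ≥ (3/4) k n ≥ 3 n² / (64 l)`. -/
lemma real_bound_of_long {D s n k l : ℕ} (hl : 1 ≤ l) (hk1 : 8 * (k * l) ≤ n)
    (hk2 : n < 16 * (k * l)) (h : D + s + k * n ≤ s * n ^ 2 + k * (2 * k * l)) :
    (D : ℝ) ≤ ((s : ℝ) - 1 / (10 ^ 17 * (l : ℝ) ^ 9)) * ((n : ℝ) ^ 2 - 1) := by
  have hl' : (1 : ℝ) ≤ l := by exact_mod_cast hl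
  have hk1' : 8 * ((k : ℝ) * l) ≤ n := by exact_mod_cast hk1
  have hk2' : (n : ℝ) < 16 * (k * l) := by exact_mod_cast hk2
  have h' : (D : ℝ) + s + k * n ≤ s * n ^ 2 + k * (2 * k * l) := by exact_mod_cast h
  have hk0 : (0 : ℝ) ≤ k := Nat.cast_nonneg k
  have hn0 : (0 : ℝ) ≤ n := Nat.cast_nonneg n
  have h9 : (l : ℝ) ≤ l ^ 9 := le_self_pow₀ hl' (by norm_num)
  have hc : 1 / (10 ^ 17 * (l : ℝ) ^ 9) ≤ 1 / (64 * l) := by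
    apply one_div_le_one_div_of_le (by positivity)
    nlinarith
  have h1 : 1 / (10 ^ 17 * (l : ℝ) ^ 9) * ((n : ℝ) ^ 2 - 1) ≤ 1 / (64 * l) * n ^ 2 := by
    calc _ ≤ 1 / (10 ^ 17 * (l : ℝ) ^ 9) * (n : ℝ) ^ 2 := by
          apply mul_le_mul_of_nonneg_left (by linarith) (by positivity)
      _ ≤ _ := by gcongr
  have h2 : 1 / (64 * l) * (n : ℝ) ^ 2 ≤ k * n / 4 := by
    rw [div_mul_eq_mul_div, one_mul, div_le_iff₀ (by positivity)]
    nlinarith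
  have h3 : (k : ℝ) * (2 * k * l) ≤ k * n / 4 := by nlinarith
  have h4 : (0 : ℝ) ≤ k * n := by positivity
  linarith

/-- For `n < 8 l` the required codimension is at most `64 l² / (10¹⁷ l⁹) ≤ 1`. -/
lemma real_bound_of_short {D s n l : ℕ} (hl : 1 ≤ l) (hn : n < 8 * l)
    (h : D + s < s * n ^ 2) :
    (D : ℝ) ≤ ((s : ℝ) - 1 / (10 ^ 17 * (l : ℝ) ^ 9)) * ((n : ℝ) ^ 2 - 1) := by
  have hl' : (1 : ℝ) ≤ l := by exact_mod_cast hl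
  have hn' : (n : ℝ) ≤ 8 * l := by exact_mod_cast hn.le
  have h' : (D : ℝ) + s + 1 ≤ s * n ^ 2 := by exact_mod_cast h
  have hn0 : (0 : ℝ) ≤ n := Nat.cast_nonneg n
  have h9 : (l : ℝ) ^ 2 ≤ l ^ 9 := pow_le_pow_right₀ hl' (by norm_num)
  have h1 : 1 / (10 ^ 17 * (l : ℝ) ^ 9) * ((n : ℝ) ^ 2 - 1) ≤ 1 := by
    rw [div_mul_eq_mul_div, one_mul, div_le_one (by positivity)]
    nlinarith
  linarith

theorem sl_word_map_fiber_dim_le :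
    ∀ (K : Type) [Field K] [CharZero K] [IsAlgClosed K]
      (s : ℕ) (w : FreeGroup (Fin s)), w ≠ 1 →
      ∀ (n : ℕ), 2 ≤ n →
      ∀ (g₀ : Matrix.SpecialLinearGroup (Fin n) K) (D : ℕ),
        ringKrullDim (MvPolynomial (Fin s × Fin n × Fin n) K ⧸
          vanishingIdeal K {v : Fin s × Fin n × Fin n → K |
            ∃ g : Fin s → Matrix.SpecialLinearGroup (Fin n) K,
              (∀ (i : Fin s) (a b : Fin n),
                (g i : Matrix (Fin n) (Fin n) K) a b = v (i, a, b)) ∧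
              FreeGroup.lift g w = g₀}) = D →
        (D : ℝ) ≤ ((s : ℝ) - 1 / (10 ^ 17 * (FreeGroup.norm w : ℝ) ^ 9)) *
          ((n : ℝ) ^ 2 - 1) := by
  intro K _ _ _ s w hw n hn g₀ D hD
  obtain ⟨L, _, _, g, y, hy, hgen, hg⟩ := exists_generic_point K s n w g₀ D hD
  have hl : 1 ≤ w.norm := Nat.one_le_iff_ne_zero.2 fun h => hw (FreeGroup.norm_eq_zero.1 h)
  rcases lt_or_ge n (8 * w.norm) with hlt | hge
  · exact real_bound_of_short hl hlt (lt_of_generic_point K s n hn w hw g₀ D L g y hy hgen hg)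
  · set k := n / (8 * w.norm) with hk
    -- `8 * k * w.norm ≤ n < 16 * k * w.norm`, the upper bound because `k ≥ 1`
    have h1 : k * (8 * w.norm) ≤ n := Nat.div_mul_le_self _ _
    have h2 : n < (k + 1) * (8 * w.norm) := by
      rw [mul_comm]; exact Nat.lt_mul_div_succ _ (by omega)
    have h3 : 1 ≤ k := (Nat.one_le_div_iff (by omega)).2 hge
    have h4 : 1 * w.norm ≤ k * w.norm := Nat.mul_le_mul_right _ h3
    have h5 : k * (8 * w.norm) = 8 * (k * w.norm) := by ring
    have h6 : 2 * k * w.norm = 2 * (k * w.norm) := by ring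
    rw [add_mul] at h2
    exact real_bound_of_long hl (by omega) (by omega)
      (dim_add_le_of_length_lt hy hgen w hw g₀ hg k (by omega))
end

section
/- Let 𝔤 be a finite-dimensional simple Lie algebra over an algebraically closed field K of characteristic 0, let 𝔥 ⊆ 𝔤 be a Cartan subalgebra, and let Z ∈ 𝔤 be a nonzero element. Then the centralizer C_𝔤(Z) = {W ∈ 𝔤 : [Z,W] = 0} (the kernel of ad Z) satisfies dim_K C_𝔤(Z) ≤ dim_K 𝔤 − dim_K 𝔥 − 1. -/
/-!
The claim is that the range of `ad Z` has dimension at least `r + 1`, where `r = dim 𝔥`.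

*Degeneration to a homogeneous element.* Decompose `𝔤` into the root spaces of `𝔥` (with
`𝔤₀ = 𝔥`) and put a total order, compatible with addition, on the functions `𝔥 → K`; one exists
because these form a rational vector space. Let `z` be the leading component of `Z`. Whenever `y`
is homogeneous and `⁅z, y⁆ ≠ 0`, the leading component of `⁅Z, y⁆` is `⁅z, y⁆`, so it suffices
to find `r + 1` homogeneous `y` for which the `⁅z, y⁆` are nonzero of pairwise distinct weights
(`card_le_finrank_of_leading`, `card_le_finrank_range_ad`).

*Spanning.* If `h ∈ 𝔥` is nonzero, the roots not vanishing at `h` span the dual of `𝔥`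
(`eq_zero_of_forall_weight`): the centralizer of `⨁ 𝔤_α`, the sum running over `α h ≠ 0`, is an
ideal, hence zero by simplicity.

*Leading component in `𝔥`.* If `z = h ∈ 𝔥`, use root vectors for the roots with `α h ≠ 0`. The set
of these is stable under negation and still spans after removing one element, so it has at least
`r + 1` elements.

*Leading component a root vector.* If `z ∈ 𝔤_α`, let `T` be the set of weights `β` such that
`β (α^∨)` is not a natural number. By `sl₂`-theory `ad z` is injective on `𝔤_β` for `β ∈ T`,
and `T ∪ -T` is the set of all roots not vanishing at `α^∨`, so `T` has at least `r` elements. The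
weights `α + β` for `β ∈ T`, together with `α` itself (from `⁅z, α^∨⁆`), give the `r + 1` weights.
-/

namespace CentralizerDim

/-! ### Leading terms in a graded vector space -/

section Graded

variable {K V ι Γ : Type*} [Field K] [AddCommGroup V] [Module K V] [LinearOrder Γ]

/-- The sum of the pieces `W i` of degree `o i < g`. -/
def lower (o : ι → Γ) (W : ι → Submodule K V) (g : Γ) : Submodule K V :=
  ⨆ i : ι, ⨆ _ : o i < g, W i

lemma le_lower (o : ι → Γ) (W : ι → Submodule K V) {g : Γ} {i : ι} (h : o i < g) :
    W i ≤ lower o W g :=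
  le_iSup₂_of_le i h le_rfl

lemma lower_mono (o : ι → Γ) (W : ι → Submodule K V) {g g' : Γ} (h : g ≤ g') :
    lower o W g ≤ lower o W g' :=
  iSup₂_le fun _ hi => le_lower o W (hi.trans_le h)

lemma disjoint_lower (o : ι → Γ) {W : ι → Submodule K V} (hW : iSupIndep W) (i : ι) :
    Disjoint (W i) (lower o W (o i)) := by
  refine (hW i).mono_right (iSup₂_le fun j hj => ?_)
  refine le_iSup₂_of_le j ?_ le_rfl
  rintro rfl
  exact lt_irrefl _ hj

lemma exists_leading {o : ι → Γ} (ho : Function.Injective o) {W : ι → Submodule K V}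
    (hW : iSup W = ⊤) {z : V} (hz : z ≠ 0) :
    ∃ i, ∃ w ∈ W i, w ≠ 0 ∧ z - w ∈ lower o W (o i) := by
  classical
  obtain ⟨f, hf, hfz⟩ := (Submodule.mem_iSup_iff_exists_finsupp W z).1 (hW ▸ Submodule.mem_top)
  have hne : f.support.Nonempty := by
    rw [Finset.nonempty_iff_ne_empty]
    intro h
    apply hz
    rw [← hfz, Finsupp.sum, h, Finset.sum_empty]
  obtain ⟨i, hi, hmax⟩ := f.support.exists_max_image o hne
  refine ⟨i, f i, hf i, by simpa using hi, ?_⟩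
  rw [← hfz, Finsupp.sum, ← Finset.add_sum_erase _ _ hi, add_sub_cancel_left]
  refine Submodule.sum_mem _ fun j hj => ?_
  rw [Finset.mem_erase] at hj
  exact le_lower o W (lt_of_le_of_ne (hmax j hj.2) fun h => hj.1 (ho h)) (hf j)

/-- Vectors with leading terms in pairwise distinct pieces are linearly independent. -/
lemma card_le_finrank_of_leading [FiniteDimensional K V] {o : ι → Γ}
    (ho : Function.Injective o) {W : ι → Submodule K V} (hW : iSupIndep W)
    (U : Submodule K V) (S : Finset ι)
    (hS : ∀ i ∈ S, ∃ v ∈ U, ∃ w ∈ W i, w ≠ 0 ∧ v - w ∈ lower o W (o i)) :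
    S.card ≤ Module.finrank K U := by
  classical
  choose! v hvU w hwW hw0 hvw using hS
  have hli : LinearIndependent K (fun i : S => (⟨v i, hvU i i.2⟩ : U)) := by
    apply LinearIndependent.of_comp U.subtype
    rw [Fintype.linearIndependent_iff]
    intro c hc
    by_contra! hne
    obtain ⟨i₀, hi₀⟩ := hne
    obtain ⟨i, hi, hmax⟩ := (Finset.univ.filter fun i : S => c i ≠ 0).exists_max_image
      (fun i => o i) ⟨i₀, by simp [hi₀]⟩
    rw [Finset.mem_filter] at hi
    have hrest : ∑ j ∈ Finset.univ.erase i, c j • v j ∈ lower o W (o i) := by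
      refine Submodule.sum_mem _ fun j hj => ?_
      by_cases hcj : c j = 0
      · simp [hcj]
      have hlt : o j < o i := lt_of_le_of_ne (hmax j (by simp [hcj]))
        fun h => (Finset.mem_erase.1 hj).1 (Subtype.ext (ho h))
      have h1 := lower_mono o W hlt.le (hvw j j.2)
      have h2 := le_lower o W hlt (hwW j j.2)
      have := add_mem h1 h2
      rw [sub_add_cancel] at this
      exact Submodule.smul_mem _ _ this
    have hsum : c i • v i + ∑ j ∈ Finset.univ.erase i, c j • v j = 0 := by
      rw [Finset.add_sum_erase _ (fun j : S => c j • v j) (Finset.mem_univ i)]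
      simpa using hc
    have hvi : v i ∈ lower o W (o i) := by
      rw [← (lower o W (o i)).smul_mem_iff hi.2, eq_neg_of_add_eq_zero_left hsum]
      exact neg_mem hrest
    have hwi : w i ∈ lower o W (o i) := by
      have := sub_mem hvi (hvw i i.2)
      rwa [sub_sub_cancel] at this
    exact hw0 i i.2 (Submodule.disjoint_def.1 (disjoint_lower o hW i) _ (hwW i i.2) hwi)
  simpa using hli.fintype_card_le_finrank

end Graded

/-- Every additive group underlying a rational vector space carries a compatible total order. -/
lemma exists_order (A : Type) [AddCommGroup A] [Module ℚ A] :
    ∃ (Γ : Type) (_ : AddCommGroup Γ) (_ : LinearOrder Γ) (_ : IsOrderedAddMonoid Γ)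
      (o : A →+ Γ), Function.Injective o := by
  let b := Module.Basis.ofVectorSpace ℚ A
  classical
  let _ : LinearOrder (Module.Basis.ofVectorSpaceIndex ℚ A) := linearOrderOfSTO WellOrderingRel
  refine ⟨Lex (Module.Basis.ofVectorSpaceIndex ℚ A →₀ ℚ), inferInstance, inferInstance,
    inferInstance, ⟨⟨fun a => toLex (b.repr a), by simp⟩, fun x y => by simp⟩, ?_⟩
  intro x y h
  exact b.repr.injective (toLex.injective h)

/-! ### Root spaces -/

set_option linter.unusedSectionVars false

section Lie

open LieAlgebra LieModule

variable {K L : Type} [Field K] [CharZero K] [IsAlgClosed K] [LieRing L] [LieAlgebra K L]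
  [Module.Finite K L] [LieAlgebra.IsKilling K L] {H : LieSubalgebra K L} [H.IsCartanSubalgebra]

variable (H) in
/-- The underlying subspace of the root space of an arbitrary function `χ : H → K`; it is zero
unless `χ` is a weight. -/
def rsp (χ : H → K) : Submodule K L := (rootSpace H χ).toSubmodule

lemma rsp_indep : iSupIndep (rsp H) :=
  LieSubmodule.iSupIndep_toSubmodule.2 (iSupIndep_genWeightSpace K H L)

lemma rsp_iSup : iSup (rsp H) = ⊤ := by
  have h := congrArg LieSubmodule.toSubmodule (iSup_genWeightSpace_eq_top K H L)
  rw [LieSubmodule.iSup_toSubmodule] at h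
  exact h

lemma lie_mem_rsp {χ ψ : H → K} {x y : L} (hx : x ∈ rsp H χ) (hy : y ∈ rsp H ψ) :
    ⁅x, y⁆ ∈ rsp H (χ + ψ) :=
  lie_mem_genWeightSpace_of_mem_genWeightSpace hx hy

lemma lie_mem_lower {Γ : Type} [AddCommGroup Γ] [LinearOrder Γ] [IsOrderedAddMonoid Γ]
    (o : (H → K) →+ Γ) {g : Γ} {χ : H → K} {x y : L} (hx : x ∈ lower o (rsp H) g)
    (hy : y ∈ rsp H χ) : ⁅x, y⁆ ∈ lower o (rsp H) (g + o χ) := by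
  have hle : lower o (rsp H) g ≤
      (lower o (rsp H) (g + o χ)).comap (-(LieAlgebra.ad K L y : L →ₗ[K] L)) := by
    refine iSup₂_le fun ψ hψ u hu => ?_
    rw [Submodule.mem_comap, LinearMap.neg_apply, LieAlgebra.ad_apply, lie_skew]
    refine le_lower o (rsp H) (i := ψ + χ) ?_ (lie_mem_rsp hu hy)
    rw [map_add]
    exact add_lt_add_left hψ _
  have := hle hx
  rwa [Submodule.mem_comap, LinearMap.neg_apply, LieAlgebra.ad_apply, lie_skew] at this

/-- If `z` is the leading component of `Z`, then the rank of `ad Z` is at least the number of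
distinct weights of nonzero brackets `⁅z, y⁆` with `y` homogeneous. -/
lemma card_le_finrank_range_ad {Γ : Type} [AddCommGroup Γ] [LinearOrder Γ]
    [IsOrderedAddMonoid Γ] (o : (H → K) →+ Γ) (ho : Function.Injective o) {Z z : L} {χ : H → K}
    (hz : z ∈ rsp H χ) (hZ : Z - z ∈ lower o (rsp H) (o χ)) (S : Finset (H → K))
    (hS : ∀ μ ∈ S, ∃ ψ, ∃ y ∈ rsp H ψ, χ + ψ = μ ∧ ⁅z, y⁆ ≠ 0) :
    S.card ≤ Module.finrank K (LinearMap.range (LieAlgebra.ad K L Z : L →ₗ[K] L)) := by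
  refine card_le_finrank_of_leading ho rsp_indep _ S fun μ hμ => ?_
  obtain ⟨ψ, y, hy, rfl, hne⟩ := hS μ hμ
  refine ⟨⁅Z, y⁆, ⟨y, rfl⟩, ⁅z, y⁆, lie_mem_rsp hz hy, hne, ?_⟩
  rw [← sub_lie, map_add]
  exact lie_mem_lower o hZ hy

/-- The roots not vanishing at a nonzero `h` span the dual of `H`: the elements of `L` commuting
with all the corresponding root spaces form a proper ideal. -/
lemma eq_zero_of_forall_weight (hL : LieAlgebra.IsSimple K L) {h x : H} (hh : h ≠ 0)
    (hx : ∀ α : Weight K H L, α h ≠ 0 → α x = 0) : x = 0 := by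
  let C : LieIdeal K L :=
    { carrier := {u | ∀ α : H → K, α h ≠ 0 → ∀ y ∈ rsp H α, ⁅u, y⁆ = 0}
      add_mem' := fun ha hb α hα y hy => by rw [add_lie, ha α hα y hy, hb α hα y hy, add_zero]
      zero_mem' := fun α hα y hy => zero_lie y
      smul_mem' := fun c u hu α hα y hy => by rw [smul_lie, hu α hα y hy, smul_zero]
      lie_mem := by
        intro a u hu α hα y hy
        have ha : a ∈ iSup (rsp H) := rsp_iSup (K := K) (H := H) ▸ Submodule.mem_top
        induction ha using Submodule.iSup_induction' with
        | zero => simp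
        | add p q _ _ hp hq => rw [add_lie, add_lie, hp, hq, add_zero]
        | mem β b hb =>
          by_cases hβ : β h = 0
          · rw [lie_lie, hu α hα y hy, hu (β + α) (by simpa [hβ] using hα) _ (lie_mem_rsp hb hy)]
            simp
          · rw [← lie_skew b u, hu β hβ b hb]
            simp }
  have hroot : ∀ (k : H) (α : H → K), ∀ y ∈ rsp H α, ⁅(k : L), y⁆ = α k • y :=
    fun k α y hy => IsKilling.lie_eq_smul_of_mem_rootSpace hy k
  have hxC : (x : L) ∈ C := by
    intro α hα y hy
    by_cases hy0 : y = 0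
    · simp [hy0]
    let α' : Weight K H L := ⟨α, fun hbot => hy0 <| by
      have : y ∈ rootSpace H α := hy
      simpa [rootSpace, hbot] using this⟩
    rw [hroot x α y hy, show α x = 0 from hx α' hα, zero_smul]
  rcases hL.eq_bot_or_eq_top C with hC | hC
  · rw [hC, LieSubmodule.mem_bot] at hxC
    exact_mod_cast hxC
  · exfalso
    have hhC : (h : L) ∈ C := hC ▸ LieSubmodule.mem_top _
    have hcent : (h : L) ∈ LieAlgebra.center K L := by
      rw [LieModule.mem_maxTrivSubmodule]
      intro a
      rw [← lie_skew, neg_eq_zero]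
      have ha : a ∈ iSup (rsp H) := rsp_iSup (K := K) (H := H) ▸ Submodule.mem_top
      induction ha using Submodule.iSup_induction' with
      | zero => simp
      | add p q _ _ hp hq => rw [lie_add, hp, hq, add_zero]
      | mem β b hb =>
        by_cases hβ : β h = 0
        · rw [hroot h β b hb, hβ, zero_smul]
        · exact hhC β hβ b hb
    rw [LieAlgebra.center_eq_bot, LieSubmodule.mem_bot] at hcent
    exact hh (by exact_mod_cast hcent)

lemma finrank_le_card (T : Finset (Weight K H L))
    (hT : ∀ x : H, (∀ α ∈ T, α x = 0) → x = 0) : Module.finrank K H ≤ T.card := by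
  let φ : H →ₗ[K] (T → K) := LinearMap.pi fun α => (α : Weight K H L).toLinear
  have hφ : Function.Injective φ := by
    rw [← LinearMap.ker_eq_bot, LinearMap.ker_eq_bot']
    intro x hx
    exact hT x fun α hα => congrFun hx ⟨α, hα⟩
  simpa using LinearMap.finrank_le_finrank_of_injective hφ

lemma weight_coe_injective : Function.Injective fun β : Weight K H L => (β : H → K) :=
  DFunLike.coe_injective

/-- Enough weights when the leading component is a nonzero element of the Cartan subalgebra. -/
lemma exists_weights_of_cartan (hL : LieAlgebra.IsSimple K L) {h : H} (hh : h ≠ 0) :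
    ∃ S : Finset (H → K), Module.finrank K H + 1 ≤ S.card ∧
      ∀ μ ∈ S, ∃ ψ, ∃ y ∈ rsp H ψ, 0 + ψ = μ ∧ ⁅(h : L), y⁆ ≠ 0 := by
  classical
  let T : Finset (Weight K H L) := Finset.univ.filter fun α => α h ≠ 0
  obtain ⟨α₀, hα₀⟩ : ∃ α : Weight K H L, α h ≠ 0 := by
    by_contra! hne
    exact hh (eq_zero_of_forall_weight hL hh fun α _ => hne α)
  have hα₀T : α₀ ∈ T := by simp [T, hα₀]
  -- Spanning survives the removal of `α₀` since `-α₀` remains.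
  have hcard : Module.finrank K H ≤ (T.erase α₀).card := by
    refine finrank_le_card _ fun x hx => eq_zero_of_forall_weight hL hh fun α hα => ?_
    by_cases hαα : α = α₀
    · have hneg : (-α₀) ∈ T.erase α₀ := by
        rw [Finset.mem_erase]
        refine ⟨fun he => hα₀ ?_, by simp [T, hα₀]⟩
        have := congrArg (fun β : Weight K H L => β h) he
        simpa [CharZero.neg_eq_self_iff] using this
      have := hx _ hneg
      rw [hαα]
      simpa using this
    · exact hx α (by simp [T, hα, hαα])
  rw [Finset.card_erase_of_mem hα₀T] at hcard
  have hpos : 0 < T.card := Finset.card_pos.2 ⟨α₀, hα₀T⟩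
  refine ⟨T.image fun α : Weight K H L => (α : H → K), ?_, ?_⟩
  · rw [Finset.card_image_of_injective _ weight_coe_injective]
    omega
  · intro μ hμ
    obtain ⟨α, hα, rfl⟩ := Finset.mem_image.1 hμ
    obtain ⟨y, hy, hy0⟩ := α.exists_ne_zero
    refine ⟨α, y, hy, zero_add _, ?_⟩
    rw [show ⁅(h : L), y⁆ = α h • y from IsKilling.lie_eq_smul_of_mem_rootSpace hy h]
    exact smul_ne_zero (by simpa [T] using hα) hy0

/-- Enough weights when the leading component is a root vector: bracketing it with root spaces
on which `α^∨` does not act by a natural number is injective. -/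
lemma exists_weights_of_root (hL : LieAlgebra.IsSimple K L) {α : Weight K H L}
    (hα : α.IsNonZero) {z : L} (hz : z ∈ rsp H α) (hz0 : z ≠ 0) :
    ∃ S : Finset (H → K), Module.finrank K H + 1 ≤ S.card ∧
      ∀ μ ∈ S, ∃ ψ, ∃ y ∈ rsp H ψ, (α : H → K) + ψ = μ ∧ ⁅z, y⁆ ≠ 0 := by
  classical
  obtain ⟨h, e, f, ht, he, hf⟩ := IsKilling.exists_isSl2Triple_of_weight_isNonZero hα
  obtain rfl := ht.h_eq_coroot hα he hf
  obtain ⟨c, hc⟩ := (finrank_eq_one_iff_of_nonzero' (⟨e, he⟩ : rootSpace H α)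
    (by simp [ht.e_ne_zero])).1 (IsKilling.finrank_rootSpace_eq_one α hα) ⟨z, hz⟩
  replace hc : c • e = z := congrArg Subtype.val hc
  have hc0 : c ≠ 0 := by
    rintro rfl
    exact hz0 (by rw [← hc, zero_smul])
  set k : H := IsKilling.coroot α with hk
  have hαk : α k = 2 := IsKilling.root_apply_coroot hα
  have hk0 : k ≠ 0 := by
    intro h0
    rw [h0, ← Weight.toLinear_apply, map_zero] at hαk
    exact two_ne_zero hαk.symm
  let T : Finset (Weight K H L) := Finset.univ.filter fun β => ∀ n : ℕ, β k ≠ n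
  have hcard : Module.finrank K H ≤ T.card := by
    refine finrank_le_card _ fun x hx => eq_zero_of_forall_weight hL hk0 fun β hβ => ?_
    by_cases hβT : β ∈ T
    · exact hx β hβT
    · -- A nonzero natural number has no natural negative, so `-β ∈ T`.
      have hn : ∃ n : ℕ, β k = n := by simpa [T] using hβT
      obtain ⟨n, hn⟩ := hn
      have hneg : (-β) ∈ T := by
        simp only [T, Finset.mem_filter, Finset.mem_univ, true_and]
        intro m hm
        have h1 : ((n + m : ℕ) : K) = 0 := by
          have hm' : - (β k) = m := by simpa using hm
          push_cast
          rw [← hm', hn, add_neg_cancel]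
        have h2 : n + m = 0 := by exact_mod_cast h1
        apply hβ
        rw [hn, show n = 0 by omega, Nat.cast_zero]
      simpa using hx _ hneg
  let A : Finset (H → K) := T.image fun β : Weight K H L => (α : H → K) + β
  have hA : A.card = T.card :=
    Finset.card_image_of_injective _
      ((add_right_injective (α : H → K)).comp weight_coe_injective)
  have hαA : (α : H → K) ∉ A := by
    intro hmem
    obtain ⟨β, hβ, hβα⟩ := Finset.mem_image.1 hmem
    have hβ0 : β k = 0 := by
      have := congrFun hβα k
      simpa using this
    have hβ' : ∀ n : ℕ, β k ≠ n := by simpa [T] using hβ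
    exact hβ' 0 (by simpa using hβ0)
  refine ⟨insert (α : H → K) A, ?_, ?_⟩
  · rw [Finset.card_insert_of_notMem hαA, hA]
    omega
  · intro μ hμ
    rcases Finset.mem_insert.1 hμ with rfl | hμ
    · refine ⟨0, (k : L), ?_, add_zero _, ?_⟩
      · change (k : L) ∈ rootSpace H 0
        rw [rootSpace_zero_eq]
        exact k.2
      · rw [← lie_skew, neg_ne_zero,
          show ⁅(k : L), z⁆ = α k • z from IsKilling.lie_eq_smul_of_mem_rootSpace hz k, hαk]
        exact smul_ne_zero two_ne_zero hz0
    · obtain ⟨β, hβ, rfl⟩ := Finset.mem_image.1 hμ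
      obtain ⟨y, hy, hy0⟩ := β.exists_ne_zero
      refine ⟨β, y, hy, rfl, ?_⟩
      rw [← hc, smul_lie]
      refine smul_ne_zero hc0 fun hey => ?_
      -- Otherwise `y` is a primitive vector, whose weight would be a natural number.
      have P : ht.HasPrimitiveVectorWith y (β k) :=
        ⟨hy0, IsKilling.lie_eq_smul_of_mem_rootSpace hy k, hey⟩
      obtain ⟨n, hn⟩ := P.exists_nat
      have hβ' : ∀ n : ℕ, β k ≠ n := by simpa [T] using hβ
      exact hβ' n hn

end Lie

end CentralizerDim

open CentralizerDim in
theorem centralizer_dim_le_of_ne_zero :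
    ∀ (K : Type) [Field K] [CharZero K] [IsAlgClosed K]
      (L : Type) [LieRing L] [LieAlgebra K L] [Module.Finite K L],
      LieAlgebra.IsSimple K L →
      ∀ (H : LieSubalgebra K L), H.IsCartanSubalgebra →
      ∀ Z : L, Z ≠ 0 →
        Module.finrank K (LinearMap.ker ((LieAlgebra.ad K L Z) : L →ₗ[K] L)) +
          Module.finrank K H + 1 ≤ Module.finrank K L := by
  intro K _ _ _ L _ _ _ hL H hH Z hZ
  let _ : Module ℚ (H → K) := Module.compHom (H → K) (algebraMap ℚ K)
  obtain ⟨Γ, _, _, _, o, ho⟩ := exists_order (H → K)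
  obtain ⟨χ, z, hz, hz0, hZz⟩ := exists_leading ho (rsp_iSup (K := K) (H := H)) hZ
  obtain ⟨S, hS, hS'⟩ : ∃ S : Finset (H → K), Module.finrank K H + 1 ≤ S.card ∧
      ∀ μ ∈ S, ∃ ψ, ∃ y ∈ rsp H ψ, χ + ψ = μ ∧ ⁅z, y⁆ ≠ 0 := by
    by_cases hχ : χ = 0
    · subst hχ
      have hzH : z ∈ H := by
        have hz' : z ∈ LieAlgebra.rootSpace H (0 : H → K) := hz
        rwa [LieAlgebra.rootSpace_zero_eq] at hz'
      exact exists_weights_of_cartan hL (h := ⟨z, hzH⟩) fun h0 => hz0 (congrArg Subtype.val h0)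
    · let α : LieModule.Weight K H L := ⟨χ, fun hbot => hz0 <| by
        have hz' : z ∈ LieAlgebra.rootSpace H χ := hz
        simpa [LieAlgebra.rootSpace, hbot] using hz'⟩
      exact exists_weights_of_root hL (α := α) hχ hz hz0
  have h1 := card_le_finrank_range_ad o ho hz hZz S hS'
  have h2 := LinearMap.finrank_range_add_finrank_ker (LieAlgebra.ad K L Z : L →ₗ[K] L)
  omega
end

section
/- Let K be a field of characteristic 0, let d ≥ 2 and r ≥ 1, and let w be a nonzero element of the free Lie algebra L_r over K that lies in the K-span of iterated Lie brackets of the generators of length at most 2d − 1 (equivalently, w has degree strictly less than 2d). Then the word map φ_w : sl_d(K)^r → sl_d(K) is not identically zero. Equivalently, any nonzero Lie algebra word inducing the zero map on sl_d has degree at least 2d. -/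
/-!
The proof has three parts.

*Embedding in the free associative algebra.* Let `L` be the free Lie algebra. Each generator `x`
acts on `K × L` by `(c, l) ↦ (0, c x + [x, l])`, and the induced Lie homomorphism `ρ` from `L` to
the endomorphisms satisfies `ρ(P)(c, l) = (0, c E(P) + [P, l])`, where `E` multiplies a bracket of
length `n` by `n`. As `ρ` takes values in an associative algebra, it factors through the free
associative algebra, so the kernel of `L → K⟨X⟩` lies in the kernel of `E`. In characteristic zero
`E` is injective, because `L` is spanned by eigenvectors with nonzero eigenvalues. No form of the
Poincaré–Birkhoff–Witt theorem is needed.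

*Staircase substitution.* Let `u = i_0 ⋯ i_{n-1}` be a word with nonzero coefficient in the image of
`w`; then `1 ≤ n ≤ 2d - 1`. Along a path `P 0 ≤ P 1 ≤ … ≤ P n` of matrix indices that stays at each
vertex for at most one step (such as `0, 0, 1, 1, 2, …`), substitute for the letter `i` the matrix
`∑ t_k E_{P k, P (k+1)}` over the positions `k` where `u` has the letter `i`. In the entry
`(P 0, P n)` the monomial `t_0 ⋯ t_{n-1}` comes from the word `u` only, since the path steps can be
concatenated in one order only. As `K` is infinite, some values of the `t_k` make this entry of
`w` nonzero, and the path can be chosen with `P 0 ≠ P n`.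

*Traceless matrices.* In characteristic zero every matrix is a traceless one plus a scalar one, and
replacing the arguments by their traceless parts changes the value of `w` by a scalar matrix, hence
does not change the off-diagonal entry `(P 0, P n)`.
-/

/-!
Statement 12: (Corollary of the Amitsur–Levitzki theorem; Corollary 4.8(1) of
Glazer–Hendel.) Over a field `K` of characteristic zero, any nonzero Lie algebra word
`w ∈ L_r` of degree strictly less than `2d` (i.e. lying in the span of iterated brackets of
the generators of length at most `2d − 1`) induces a nonzero word map on `sl_d(K)`.
Equivalently, any nonzero Lie algebra word inducing the zero map on `sl_d` has degree at
least `2d`.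
-/

/-- `IsLieMonomialOfLength K x n` : `x` is an iterated Lie bracket of the generators of the
free Lie algebra, of length `n`. -/
inductive IsLieMonomialOfLength (K : Type) [CommRing K] {r : ℕ} :
    FreeLieAlgebra K (Fin r) → ℕ → Prop
  | of (i : Fin r) : IsLieMonomialOfLength K (FreeLieAlgebra.of K i) 1
  | bracket {x y : FreeLieAlgebra K (Fin r)} {a b : ℕ} :
      IsLieMonomialOfLength K x a → IsLieMonomialOfLength K y b →
      IsLieMonomialOfLength K ⁅x, y⁆ (a + b)

/-- A Lie algebra word `w ∈ L_r` has degree at most `d` if it is a `K`-linear combination of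
iterated Lie brackets of the generators of length at most `d`. -/
def LieWordDegLE (K : Type) [CommRing K] {r : ℕ} (d : ℕ)
    (w : FreeLieAlgebra K (Fin r)) : Prop :=
  w ∈ Submodule.span K {x : FreeLieAlgebra K (Fin r) | ∃ n ≤ d, IsLieMonomialOfLength K x n}

-- The commutator bracket on an associative algebra is not a global instance.
attribute [local instance] LieRing.ofAssociativeRing

namespace LieWord

noncomputable section

variable {K : Type} [Field K] {r : ℕ}

/-! ### The free Lie algebra inside the free associative algebra -/

/-- The free associative algebra on `r` letters, as the algebra of the monoid of words; this makes
the coefficient of a word directly available. -/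
abbrev Assoc (K : Type) [Field K] (r : ℕ) : Type := MonoidAlgebra K (FreeMonoid (Fin r))

/-- A letter as an element of the free associative algebra. -/
def letter (i : Fin r) : Assoc K r := MonoidAlgebra.single (FreeMonoid.of i) 1

/-- The canonical map from the free Lie algebra to the free associative algebra. -/
def toAssoc (K : Type) [Field K] (r : ℕ) : FreeLieAlgebra K (Fin r) →ₗ⁅K⁆ Assoc K r :=
  FreeLieAlgebra.lift K letter

/-- The algebra homomorphism given by substitution of elements of an associative algebra for
the letters. -/
def subst {B : Type} [Ring B] [Algebra K B] (Y : Fin r → B) : Assoc K r →ₐ[K] B :=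
  MonoidAlgebra.lift K B (FreeMonoid (Fin r)) (FreeMonoid.lift Y)

/-- Every Lie word map into an associative algebra factors through the free associative algebra. -/
lemma lift_eq_subst {B : Type} [Ring B] [Algebra K B] (Y : Fin r → B)
    (w : FreeLieAlgebra K (Fin r)) :
    FreeLieAlgebra.lift K Y w = subst Y (toAssoc K r w) := by
  have h : FreeLieAlgebra.lift K Y = (AlgHom.toLieHom (subst Y)).comp (toAssoc K r) := by
    apply FreeLieAlgebra.hom_ext
    intro i
    simp [toAssoc, subst, letter]
  rw [h]
  rfl

/-- The operator `(c, l) ↦ (0, c x + [x, l])` on `K × L`. -/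
def shift {L : Type} [LieRing L] [LieAlgebra K L] (x : L) : Module.End K (K × L) :=
  (LinearMap.inr K K L).comp
    ((LinearMap.toSpanSingleton K L x).coprod (LieAlgebra.ad K L x))

lemma shift_apply {L : Type} [LieRing L] [LieAlgebra K L] (x : L) (c : K) (l : L) :
    shift x (c, l) = (0, c • x + ⁅x, l⁆) := by
  simp [shift]

/-- On a bracket of length `n`, the Lie map extending `shift` sends `(1, 0)` to `(0, n • x)`, so that
`w ↦ (image of (1, 0) under w).2` is the Euler derivation of the free Lie algebra. -/
lemma lift_shift_monomial {x : FreeLieAlgebra K (Fin r)} {n : ℕ}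
    (h : IsLieMonomialOfLength K x n) (c : K) (l : FreeLieAlgebra K (Fin r)) :
    FreeLieAlgebra.lift K
      (fun i => (shift (FreeLieAlgebra.of K i) : Module.End K (K × FreeLieAlgebra K (Fin r)))) x
      (c, l) = (0, (c * n) • x + ⁅x, l⁆) := by
  induction h generalizing c l with
  | of i => simp [shift_apply]
  | @bracket x y a b _ _ ihx ihy =>
    rw [LieHom.map_lie, LieRing.of_associative_ring_bracket, LinearMap.sub_apply,
      Module.End.mul_apply, Module.End.mul_apply, ihy, ihx, ihx, ihy]
    ext
    · simp
    · simp only [zero_mul, zero_smul, zero_add, Prod.snd_sub, lie_add, lie_smul, Nat.cast_add]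
      rw [lie_lie, ← lie_skew x y]
      module

/-- The Euler derivation, which multiplies brackets of length `n` by `n`. -/
def euler (K : Type) [Field K] (r : ℕ) : Module.End K (FreeLieAlgebra K (Fin r)) :=
  ((LinearMap.snd K K _).comp (LinearMap.applyₗ (1, 0))).comp
    (FreeLieAlgebra.lift K (fun i => (shift (FreeLieAlgebra.of K i) :
      Module.End K (K × FreeLieAlgebra K (Fin r))))).toLinearMap

lemma euler_monomial {x : FreeLieAlgebra K (Fin r)} {n : ℕ}
    (h : IsLieMonomialOfLength K x n) : euler K r x = (n : K) • x := by
  simp [euler, lift_shift_monomial h]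

lemma length_pos {x : FreeLieAlgebra K (Fin r)} {n : ℕ}
    (h : IsLieMonomialOfLength K x n) : 1 ≤ n := by
  induction h with
  | of i => rfl
  | bracket _ _ ih _ => omega

/-- In characteristic zero the free Lie algebra embeds in the free associative algebra: the Euler
derivation kills the kernel, and its eigenvalues are nonzero. -/
lemma toAssoc_ne_zero [CharZero K] {m : ℕ} {w : FreeLieAlgebra K (Fin r)} (hw : w ≠ 0)
    (hm : LieWordDegLE K m w) : toAssoc K r w ≠ 0 := by
  intro h0
  apply hw
  have he : euler K r w = 0 := by
    simp [euler, lift_eq_subst, h0]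
  have h1 : w ∈ (euler K r).eigenspace 0 := by
    rw [Module.End.mem_eigenspace_iff, he, zero_smul]
  have h2 : w ∈ ⨆ (μ : K) (_ : μ ≠ 0), (euler K r).eigenspace μ := by
    refine (Submodule.span_le.2 ?_) hm
    rintro x ⟨n, -, hx⟩
    have hn : (n : K) ≠ 0 := Nat.cast_ne_zero.2 (by have := length_pos hx; omega)
    exact Submodule.mem_iSup_of_mem (n : K) (Submodule.mem_iSup_of_mem hn
      (Module.End.mem_eigenspace_iff.2 (euler_monomial hx)))
  exact Submodule.disjoint_def.1 ((euler K r).eigenspaces_iSupIndep 0) w h1 h2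

lemma length_of_mem_support {x : FreeLieAlgebra K (Fin r)} {n : ℕ}
    (h : IsLieMonomialOfLength K x n) (v : FreeMonoid (Fin r))
    (hv : (toAssoc K r x).coeff v ≠ 0) : v.length = n := by
  induction h generalizing v with
  | of i =>
    rw [toAssoc, FreeLieAlgebra.lift_of_apply, letter, MonoidAlgebra.coeff_single,
      Finsupp.single_apply_ne_zero] at hv
    rw [hv.1, FreeMonoid.length_of]
  | @bracket x y a b _ _ ihx ihy =>
    classical
    have key : ∀ (p q : Assoc K r) (a b : ℕ), (∀ v, p.coeff v ≠ 0 → v.length = a) →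
        (∀ v, q.coeff v ≠ 0 → v.length = b) → ∀ v, (p * q).coeff v ≠ 0 → v.length = a + b := by
      intro p q a b hp hq v hv
      have := MonoidAlgebra.support_coeff_mul_subset p q (Finsupp.mem_support_iff.2 hv)
      obtain ⟨s, hs, t, ht, rfl⟩ := Finset.mem_mul.1 this
      rw [FreeMonoid.length_mul, hp s (Finsupp.mem_support_iff.1 hs),
        hq t (Finsupp.mem_support_iff.1 ht)]
    rw [LieHom.map_lie, LieRing.of_associative_ring_bracket] at hv
    by_cases h : (toAssoc K r x * toAssoc K r y).coeff v = 0
    · rw [add_comm]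
      refine key _ _ b a ihy ihx v ?_
      intro h'
      apply hv
      simp [h, h']
    · exact key _ _ a b ihx ihy v h

/-- The words occurring in a Lie word of degree at most `m` have length between `1` and `m`. -/
lemma length_bounds {m : ℕ} {w : FreeLieAlgebra K (Fin r)} (hm : LieWordDegLE K m w)
    (v : FreeMonoid (Fin r)) (hv : (toAssoc K r w).coeff v ≠ 0) :
    1 ≤ v.length ∧ v.length ≤ m := by
  by_contra hcon
  apply hv
  clear hv
  induction hm using Submodule.span_induction with
  | mem x hx =>
    obtain ⟨n, hn, hx⟩ := hx
    by_contra h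
    have h1 := length_of_mem_support hx v h
    have h2 := length_pos hx
    omega
  | zero => simp
  | add x y _ _ hx hy => simp [hx, hy]
  | smul c x _ hx => simp [hx]

/-! ### Generic matrices along a staircase path -/

section Path

variable {d : ℕ} (P : ℕ → Fin d) (u : List (Fin r))

/-- The generic matrix for the letter `i`: the sum of `t_k E_{P k, P (k+1)}` over the positions `k`
at which the word `u` has the letter `i`. -/
def generic (K : Type) [Field K] (i : Fin r) : Matrix (Fin d) (Fin d) (MvPolynomial ℕ K) :=
  ∑ k ∈ Finset.range u.length,
    if u[k]? = some i then Matrix.single (P k) (P (k + 1)) (MvPolynomial.X k) else 0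

lemma mul_generic (M : Matrix (Fin d) (Fin d) (MvPolynomial ℕ K)) (i : Fin r) (a b : Fin d) :
    (M * generic P u K i) a b = ∑ k ∈ Finset.range u.length,
      if u[k]? = some i ∧ P (k + 1) = b then M a (P k) * MvPolynomial.X k else 0 := by
  rw [generic, Matrix.mul_sum, Matrix.sum_apply]
  refine Finset.sum_congr rfl fun k _ => ?_
  by_cases h1 : u[k]? = some i
  · by_cases h2 : P (k + 1) = b
    · subst h2
      simp [h1]
    · simp [h1, h2, Matrix.mul_single_apply_of_ne, Ne.symm h2]
  · simp [h1]

/-- The value of the word `v` at the generic matrices. -/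
def walk (K : Type) [Field K] (v : List (Fin r)) : Matrix (Fin d) (Fin d) (MvPolynomial ℕ K) :=
  (v.map (generic P u K)).prod

lemma walk_append (v : List (Fin r)) (i : Fin r) :
    walk P u K (v ++ [i]) = walk P u K v * generic P u K i := by
  simp [walk]

/-- A walk ending at `b` only uses edges whose endpoint is at most `b`. -/
lemma edge_le (hP : Monotone P) (v : List (Fin r)) (a b : Fin d) (m : ℕ →₀ ℕ)
    (hm : MvPolynomial.coeff m (walk P u K v a b) ≠ 0) (l : ℕ) (hl : l ∈ m.support) :
    P (l + 1) ≤ b := by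
  classical
  induction v using List.reverseRecOn generalizing b m with
  | nil =>
    exfalso
    have h0 : (0 : ℕ →₀ ℕ) ≠ m := by
      rintro rfl
      simp at hl
    apply hm
    simp only [walk, List.map_nil, List.prod_nil, Matrix.one_apply]
    split_ifs
    · simp [MvPolynomial.coeff_one, h0]
    · simp
  | append_singleton v i ih =>
    rw [walk_append, mul_generic, MvPolynomial.coeff_sum] at hm
    obtain ⟨k, -, hk⟩ := Finset.exists_ne_zero_of_sum_ne_zero hm
    split_ifs at hk with hc
    · rw [MvPolynomial.coeff_mul_X'] at hk
      split_ifs at hk with hkm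
      · by_cases hlk : l = k
        · rw [hlk, hc.2]
        · refine (ih (P k) _ hk ?_).trans ((hP (Nat.le_succ k)).trans hc.2.le)
          simpa [Finsupp.single_apply, Ne.symm hlk] using hl
      · exact absurd rfl hk
    · simp at hk

/-- The exponent of the monomial `t_0 ⋯ t_{k-1}`. -/
def firstVars (k : ℕ) : ℕ →₀ ℕ := ∑ j ∈ Finset.range k, Finsupp.single j 1

lemma firstVars_apply (k l : ℕ) : firstVars k l = if l < k then 1 else 0 := by
  simp [firstVars, Finsupp.finsetSum_apply, Finsupp.single_apply]

/-- Among all words, only the prefix of length `k` of `u` produces the monomial `t_0 ⋯ t_{k-1}`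
in the entry `(P 0, P k)`. -/
lemma coeff_walk (hP : Monotone P) (hlt : ∀ k, k + 2 ≤ u.length → P k < P (k + 2))
    (v : List (Fin r)) (k : ℕ) (hk : k ≤ u.length) :
    MvPolynomial.coeff (firstVars k) (walk P u K v (P 0) (P k)) =
      if v = u.take k then 1 else 0 := by
  classical
  induction v using List.reverseRecOn generalizing k with
  | nil =>
    rcases Nat.eq_zero_or_pos k with rfl | hpos
    · simp [walk, firstVars]
    · have h0 : (0 : ℕ →₀ ℕ) ≠ firstVars k := by
        intro h
        have := DFunLike.congr_fun h 0
        simp [firstVars_apply, hpos] at this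
      have h1 : ¬ ([] = u.take k) := by
        intro h
        have := congrArg List.length h
        simp at this
        omega
      rw [if_neg h1]
      simp only [walk, List.map_nil, List.prod_nil, Matrix.one_apply]
      split_ifs
      · simp [MvPolynomial.coeff_one, h0]
      · simp
  | append_singleton v i ih =>
    rw [walk_append, mul_generic, MvPolynomial.coeff_sum]
    rcases Nat.eq_zero_or_pos k with rfl | hpos
    · rw [if_neg (by simp)]
      refine Finset.sum_eq_zero fun j _ => ?_
      split_ifs
      · rw [MvPolynomial.coeff_mul_X', if_neg (by simp [firstVars])]
      · simp
    obtain ⟨k, rfl⟩ : ∃ k', k = k' + 1 := ⟨k - 1, by omega⟩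
    have hku : k < u.length := hk
    rw [Finset.sum_eq_single_of_mem k (Finset.mem_range.2 hku)]
    · have hsub : firstVars (k + 1) - Finsupp.single k 1 = firstVars k := by
        simp [firstVars, Finset.sum_range_succ]
      have htake : u.take (k + 1) = u.take k ++ [u[k]] := by simp
      have hget : u[k]? = some u[k] := by simp
      have hmem : k ∈ (firstVars (k + 1)).support := by simp [firstVars_apply]
      have happ : v ++ [i] = u.take (k + 1) ↔ v = u.take k ∧ i = u[k] := by
        rw [htake, List.append_singleton_inj]
      simp only [happ, hget]
      by_cases hi : u[k] = i
      · subst hi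
        simp only [true_and, if_true]
        rw [MvPolynomial.coeff_mul_X', if_pos hmem, hsub, ih k hku.le]
        simp
      · simp [hi, Ne.symm hi]
    · intro j _ hjk
      split_ifs with hc
      · rw [MvPolynomial.coeff_mul_X']
        split_ifs with hjm
        · -- The edge `k` remains to be used, but it ends strictly above the vertex `P j`.
          have hj : j < k + 1 := by
            by_contra h
            simp [firstVars_apply, h] at hjm
          by_contra hne
          have hle := edge_le P u hP v (P 0) (P j) _ hne k (by
            simp [firstVars_apply, hjk])
          have h1 := hlt j (by omega)
          have h2 : P (j + 2) ≤ P (k + 1) := hP (by omega)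
          exact absurd (h1.trans_le (h2.trans hle)) (lt_irrefl _)
        · rfl
      · simp

/-- If `u` occurs in `f`, then some substitution of matrices in `f` has a nonzero entry
`(P 0, P |u|)`. -/
lemma exists_entry_ne_zero [Infinite K] (hP : Monotone P)
    (hlt : ∀ k, k + 2 ≤ u.length → P k < P (k + 2)) (f : Assoc K r)
    (hu : f.coeff (FreeMonoid.ofList u) ≠ 0) :
    ∃ Y : Fin r → Matrix (Fin d) (Fin d) K, subst Y f (P 0) (P u.length) ≠ 0 := by
  classical
  by_contra! hcon
  have hzero : subst (generic P u K) f (P 0) (P u.length) = 0 := by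
    apply MvPolynomial.funext
    intro t
    have hev : ∀ g : Assoc K r, (MvPolynomial.aeval t).mapMatrix (subst (generic P u K) g)
        = subst (fun i => (MvPolynomial.aeval t).mapMatrix (generic P u K i)) g := by
      intro g
      have : ((MvPolynomial.aeval t).mapMatrix).comp (subst (generic P u K))
          = subst (fun i => (MvPolynomial.aeval t).mapMatrix (generic P u K i)) := by
        refine MonoidAlgebra.algHom_ext' ?_ (Subsingleton.elim _ _)
        apply FreeMonoid.hom_eq
        intro i
        simp [subst]
      exact DFunLike.congr_fun this g
    have := hcon fun i => (MvPolynomial.aeval t).mapMatrix (generic P u K i)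
    rw [← hev] at this
    simpa [MvPolynomial.aeval_eq_eval] using this
  apply hu
  have hc := congrArg (MvPolynomial.coeff (firstVars u.length)) hzero
  rw [subst, MonoidAlgebra.lift_apply, Finsupp.sum, Matrix.sum_apply, MvPolynomial.coeff_sum] at hc
  have hterm : ∀ v ∈ f.coeff.support, MvPolynomial.coeff (firstVars u.length)
      ((f.coeff v • FreeMonoid.lift (generic P u K) v) (P 0) (P u.length)) =
      if v = FreeMonoid.ofList u then f.coeff v else 0 := by
    intro v _
    have := coeff_walk (K := K) P u hP hlt v.toList u.length le_rfl
    rw [List.take_length] at this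
    rw [Matrix.smul_apply, MvPolynomial.coeff_smul, FreeMonoid.lift_apply]
    change f.coeff v • MvPolynomial.coeff _ (walk P u K v.toList (P 0) (P u.length)) = _
    rw [this]
    have hiff : v.toList = u ↔ v = FreeMonoid.ofList u := Iff.rfl
    simp [hiff]
  rw [Finset.sum_congr rfl hterm] at hc
  simpa using hc

end Path

/-! ### From all matrices to traceless matrices -/

/-- Scalar matrices are central, so shifting the arguments of a Lie word by scalar
matrices changes its value by a scalar matrix. -/
lemma exists_scalar {d m : ℕ} (Y Z : Fin r → Matrix (Fin d) (Fin d) K) (s : Fin r → K)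
    (hYZ : ∀ i, Y i = Z i + s i • (1 : Matrix (Fin d) (Fin d) K))
    (w : FreeLieAlgebra K (Fin r)) (hm : LieWordDegLE K m w) :
    ∃ c : K, FreeLieAlgebra.lift K Y w =
      FreeLieAlgebra.lift K Z w + c • (1 : Matrix (Fin d) (Fin d) K) := by
  induction hm using Submodule.span_induction with
  | mem x hx =>
    obtain ⟨n, -, hx⟩ := hx
    induction hx with
    | of i => exact ⟨s i, by simpa using hYZ i⟩
    | bracket _ _ ihx ihy =>
      obtain ⟨c, hc⟩ := ihx
      obtain ⟨e, he⟩ := ihy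
      refine ⟨0, ?_⟩
      rw [LieHom.map_lie, LieHom.map_lie, hc, he]
      simp only [LieRing.of_associative_ring_bracket, add_mul, mul_add, smul_mul_assoc,
        mul_smul_comm, one_mul, mul_one]
      module
  | zero => exact ⟨0, by simp⟩
  | add x y _ _ hx hy =>
    obtain ⟨c, hc⟩ := hx
    obtain ⟨e, he⟩ := hy
    refine ⟨c + e, ?_⟩
    rw [map_add, map_add, hc, he]
    module
  | smul a x _ hx =>
    obtain ⟨c, hc⟩ := hx
    refine ⟨a * c, ?_⟩
    rw [map_smul, map_smul, hc]
    module

end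

end LieWord

theorem lie_word_nonzero_on_sl_of_degree_lt :
    ∀ (K : Type) [Field K] [CharZero K]
      (d r : ℕ), 2 ≤ d → 1 ≤ r →
      ∀ (w : FreeLieAlgebra K (Fin r)), w ≠ 0 → LieWordDegLE K (2 * d - 1) w →
      ∃ y : Fin r → (LieAlgebra.SpecialLinear.sl (Fin d) K),
        (FreeLieAlgebra.lift K y) w ≠ 0 := by
  intro K _ _ d r hd _ w hw hm
  classical
  have hne := LieWord.toAssoc_ne_zero hw hm
  obtain ⟨v, hv⟩ : ∃ v, (LieWord.toAssoc K r w).coeff v ≠ 0 := by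
    by_contra! h
    exact hne (MonoidAlgebra.ext (Finsupp.ext h))
  obtain ⟨h1, h2⟩ := LieWord.length_bounds hm v hv
  set u : List (Fin r) := v.toList with hu
  have hlen : v.length = u.length := rfl
  rw [hlen] at h1 h2
  -- The staircase `0, 0, 1, 1, 2, …`; for a single letter it starts at its second term, so that
  -- its two ends are always distinct.
  obtain ⟨s, hs1, hs2⟩ : ∃ s : ℕ, (u.length + s) / 2 ≤ d - 1 ∧ s / 2 < (u.length + s) / 2 := by
    by_cases h : u.length = 1
    · exact ⟨1, by omega, by omega⟩
    · exact ⟨0, by omega, by omega⟩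
  let P : ℕ → Fin d := fun k => ⟨min ((k + s) / 2) (d - 1), by omega⟩
  have hP : Monotone P := by
    intro a b hab
    simp only [P, Fin.mk_le_mk]
    omega
  have hlt : ∀ k, k + 2 ≤ u.length → P k < P (k + 2) := by
    intro k hk
    simp only [P, Fin.mk_lt_mk]
    omega
  have hends : P 0 ≠ P u.length := by
    simp only [P, ne_eq, Fin.mk.injEq]
    omega
  obtain ⟨Y, hY⟩ := LieWord.exists_entry_ne_zero P u hP hlt (LieWord.toAssoc K r w) hv
  have hd0 : (d : K) ≠ 0 := Nat.cast_ne_zero.2 (by omega)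
  let Z : Fin r → LieAlgebra.SpecialLinear.sl (Fin d) K := fun i =>
    ⟨Y i - ((Y i).trace / d) • (1 : Matrix (Fin d) (Fin d) K), by
      change Matrix.trace (Y i - ((Y i).trace / d) • (1 : Matrix (Fin d) (Fin d) K)) = 0
      simp [Matrix.trace_sub, Matrix.trace_smul, Matrix.trace_one, hd0]⟩
  refine ⟨Z, fun h0 => hY ?_⟩
  obtain ⟨c, hc⟩ := LieWord.exists_scalar Y (fun i => (Z i : Matrix (Fin d) (Fin d) K))
    (fun i => (Y i).trace / d) (fun i => by simp [Z]) w hm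
  have hval : FreeLieAlgebra.lift K (fun i => (Z i : Matrix (Fin d) (Fin d) K)) w =
      (LieAlgebra.SpecialLinear.sl (Fin d) K).incl (FreeLieAlgebra.lift K Z w) := by
    have : FreeLieAlgebra.lift K (fun i => (Z i : Matrix (Fin d) (Fin d) K)) =
        (LieAlgebra.SpecialLinear.sl (Fin d) K).incl.comp (FreeLieAlgebra.lift K Z) := by
      apply FreeLieAlgebra.hom_ext
      intro i
      simp
    rw [this]
    rfl
  rw [← LieWord.lift_eq_subst, hc, hval, h0]
  simp [Matrix.one_apply_ne hends]
end
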